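/- arXiv:1507.00445 — 6 statements merged into one kernel-verified Lean document; each statement's English description precedes it below -/
import Mathlib

section
/- Fix real constants b, k₁, k₂, k₃, k₄ > 0. Every eigenvalue λ of the dissipative Timoshenko boundary-feedback problem satisfies −(k₂ + k₄) ≤ Re(λ) < 0. -/
open Set

/-- `lam` is an eigenvalue of the dissipative Timoshenko boundary-feedback problem
(case `a = 1`) with constants `b, k₁, k₂, k₃, k₄`. -/
def IsDissipativeEigenvalue (b k₁ k₂ k₃ k₄ : ℝ) (lam : ℂ) : Prop :=
  ∃ u y : ℝ → ℂ,
    ContDiff ℝ 2 u ∧ ContDiff ℝ 2 y ∧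
    ¬ (∀ x ∈ Icc (0:ℝ) 1, u x = 0 ∧ y x = 0) ∧
    (∀ x ∈ Icc (0:ℝ) 1, deriv (deriv u) x + deriv y x - lam ^ 2 * u x = 0) ∧
    (∀ x ∈ Icc (0:ℝ) 1,
      deriv (deriv y) x - (b : ℂ) * deriv u x - (b : ℂ) * y x - lam ^ 2 * y x = 0) ∧
    u 0 = 0 ∧ y 0 = 0 ∧
    lam ^ 2 * u 1 + (k₁ : ℂ) * (deriv u 1 + y 1) + (k₂ : ℂ) * lam * u 1 = 0 ∧
    lam ^ 2 * y 1 + (k₃ : ℂ) * deriv y 1 + (k₄ : ℂ) * lam * y 1 = 0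

lemma quad_aux (M D K k : ℝ) (z : ℂ) (hM : 0 < M) (hD : 0 < D) (hK : 0 ≤ K) (hk : 0 ≤ k)
    (hDk : D ≤ k * M) (hz : z ≠ 0)
    (h : z ^ 2 * (M : ℂ) + z * (D : ℂ) + (K : ℂ) = 0) : -k ≤ z.re ∧ z.re < 0 := by
  have h1 := congrArg Complex.re h
  have h2 := congrArg Complex.im h
  simp [pow_two] at h1 h2
  by_cases hy : z.im = 0
  · have hx : z.re ≠ 0 := fun hx => hz (Complex.ext hx hy)
    rw [hy] at h1
    have hneg : z.re < 0 := by
      by_contra hc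
      have hpos : 0 < z.re := lt_of_le_of_ne (not_lt.mp hc) (Ne.symm hx)
      have := mul_pos (mul_pos hpos hpos) hM
      have := mul_pos hpos hD
      linarith
    refine ⟨?_, hneg⟩
    by_contra hc
    push Not at hc
    have h3 : z.re * M + D < 0 := by nlinarith
    have := mul_pos_of_neg_of_neg hneg h3
    nlinarith
  · have h3 : 2 * z.re * M + D = 0 := by
      apply mul_left_cancel₀ hy
      linarith
    constructor
    · by_contra hc
      push Not at hc
      nlinarith [mul_nonneg hk hM.le]
    · by_contra hc
      push Not at hc
      nlinarith [mul_nonneg hc hM.le]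

lemma const_aux (f g : ℝ → ℂ) (h : ∀ x, HasDerivAt f (g x) x)
    (hg : ∀ x ∈ Icc (0:ℝ) 1, g x = 0) : ∀ x ∈ Icc (0:ℝ) 1, f x = f 0 := by
  apply constant_of_has_deriv_right_zero
  · exact fun x _ => (h x).continuousAt.continuousWithinAt
  · intro x hx
    have := (h x).hasDerivWithinAt (s := Ici x)
    rwa [hg x ⟨hx.1, hx.2.le⟩] at this

lemma ode_aux (b l : ℂ) (u y p q p' q' : ℝ → ℂ)
    (hu : ∀ x, HasDerivAt u (p x) x) (hy : ∀ x, HasDerivAt y (q x) x)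
    (hp : ∀ x, HasDerivAt p (p' x) x) (hq : ∀ x, HasDerivAt q (q' x) x)
    (e1 : ∀ x ∈ Icc (0:ℝ) 1, p' x = l * u x - q x)
    (e2 : ∀ x ∈ Icc (0:ℝ) 1, q' x = b * p x + b * y x + l * y x)
    (u1 : u 1 = 0) (y1 : y 1 = 0) (p1 : p 1 = 0) (q1 : q 1 = 0) :
    ∀ x ∈ Icc (0:ℝ) 1, u x = 0 ∧ y x = 0 := by
  let L : (ℂ × ℂ × ℂ × ℂ) →ₗ[ℂ] (ℂ × ℂ × ℂ × ℂ) :=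
    { toFun := fun v => (v.2.2.1, v.2.2.2, l * v.1 - v.2.2.2,
        b * v.2.2.1 + b * v.2.1 + l * v.2.1)
      map_add' := by
        intro v w
        ext <;> simp <;> ring
      map_smul' := by
        intro c v
        ext <;> simp <;> ring }
  let T := LinearMap.toContinuousLinearMap L
  have key := ODE_solution_unique_of_mem_Icc_left (v := fun _ => T) (s := fun _ => univ)
    (K := ‖T‖₊) (f := fun x => (u x, y x, p x, q x)) (g := fun _ => 0) (a := 0) (b := 1)
    (fun t _ => T.lipschitz.lipschitzOnWith)
    (fun x _ => ((hu x).prodMk ((hy x).prodMk ((hp x).prodMk (hq x)))).continuousAt.continuousWithinAt)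
    (by
      intro x hx
      have := ((hu x).prodMk ((hy x).prodMk ((hp x).prodMk (hq x)))).hasDerivWithinAt (s := Iic x)
      rw [e1 x ⟨hx.1.le, hx.2⟩, e2 x ⟨hx.1.le, hx.2⟩] at this
      exact this)
    (fun _ _ => mem_univ _) continuousOn_const
    (by
      intro x hx
      simpa using hasDerivWithinAt_const x (Iic x) (0 : ℂ × ℂ × ℂ × ℂ))
    (fun _ _ => mem_univ _) (by simp [u1, y1, p1, q1])
  intro x hx
  have := key hx
  simp only [Prod.ext_iff] at this
  exact ⟨this.1, this.2.1⟩

lemma energy_aux (b : ℝ) (l : ℂ) (u y p q p' q' : ℝ → ℂ) (hb : 0 < b)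
    (hu : ∀ x, HasDerivAt u (p x) x) (hy : ∀ x, HasDerivAt y (q x) x)
    (hp : ∀ x, HasDerivAt p (p' x) x) (hq : ∀ x, HasDerivAt q (q' x) x)
    (e1 : ∀ x ∈ Icc (0:ℝ) 1, p' x = l * u x - q x)
    (e2 : ∀ x ∈ Icc (0:ℝ) 1, q' x = b * p x + b * y x + l * y x)
    (u0 : u 0 = 0) (y0 : y 0 = 0) :
    ∃ A B : ℝ, 0 ≤ A ∧ 0 ≤ B ∧
      b * (p 1 + y 1) * star (u 1) + q 1 * star (y 1) = A + l * B := by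
  have cu : Continuous u := continuous_iff_continuousAt.2 fun x => (hu x).continuousAt
  have cy : Continuous y := continuous_iff_continuousAt.2 fun x => (hy x).continuousAt
  have cp : Continuous p := continuous_iff_continuousAt.2 fun x => (hp x).continuousAt
  have cq : Continuous q := continuous_iff_continuousAt.2 fun x => (hq x).continuousAt
  let f : ℝ → ℝ := fun x => b * Complex.normSq (p x + y x) + Complex.normSq (q x)
  let g : ℝ → ℝ := fun x => b * Complex.normSq (u x) + Complex.normSq (y x)
  have cf : Continuous f := by
    have := Complex.continuous_normSq
    fun_prop
  have cg : Continuous g := by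
    have := Complex.continuous_normSq
    fun_prop
  have hf : ∀ x, 0 ≤ f x := fun x =>
    add_nonneg (mul_nonneg hb.le (Complex.normSq_nonneg _)) (Complex.normSq_nonneg _)
  have hg : ∀ x, 0 ≤ g x := fun x =>
    add_nonneg (mul_nonneg hb.le (Complex.normSq_nonneg _)) (Complex.normSq_nonneg _)
  refine ⟨∫ x in (0:ℝ)..1, f x, ∫ x in (0:ℝ)..1, g x,
    intervalIntegral.integral_nonneg zero_le_one fun x _ => hf x,
    intervalIntegral.integral_nonneg zero_le_one fun x _ => hg x, ?_⟩
  have cF : Continuous fun x => (f x : ℂ) := Complex.continuous_ofReal.comp cf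
  have cG : Continuous fun x => l * (g x : ℂ) :=
    continuous_const.mul (Complex.continuous_ofReal.comp cg)
  have key := intervalIntegral.integral_eq_sub_of_hasDerivAt (a := 0) (b := 1)
    (f := fun x => b * (p x + y x) * star (u x) + q x * star (y x))
    (f' := fun x => (f x : ℂ) + l * (g x : ℂ))
    (by
      intro x hx
      rw [uIcc_of_le zero_le_one] at hx
      have h := ((((hp x).add (hy x)).const_mul (b:ℂ)).mul (hu x).star).add
        ((hq x).mul (hy x).star)
      refine h.congr_deriv ?_
      rw [e1 x hx, e2 x hx]
      simp only [f, g, Complex.ofReal_add, Complex.ofReal_mul, Complex.normSq_eq_conj_mul_self,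
        Pi.add_apply, Complex.star_def, map_add]
      ring)
    ((cF.add cG).intervalIntegrable _ _)
  rw [intervalIntegral.integral_add (cF.intervalIntegrable _ _) (cG.intervalIntegrable _ _),
    intervalIntegral.integral_const_mul, intervalIntegral.integral_ofReal,
    intervalIntegral.integral_ofReal] at key
  rw [key]
  simp [u0, y0]

/-- Every eigenvalue of the dissipative Timoshenko boundary-feedback problem lies
in the strip `-(k₂ + k₄) ≤ Re λ < 0`. -/
theorem eigenvalue_strip
    (b k₁ k₂ k₃ k₄ : ℝ) (hb : 0 < b) (hk₁ : 0 < k₁) (hk₂ : 0 < k₂)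
    (hk₃ : 0 < k₃) (hk₄ : 0 < k₄) (lam : ℂ)
    (hlam : IsDissipativeEigenvalue b k₁ k₂ k₃ k₄ lam) :
    -(k₂ + k₄) ≤ lam.re ∧ lam.re < 0 := by
  obtain ⟨u, y, cu, cy, hne, e1, e2, u0, y0, b1, b2⟩ := hlam
  have d2 : ∀ f : ℝ → ℂ, ContDiff ℝ 2 f → (∀ x, HasDerivAt f (deriv f x) x) ∧
      ∀ x, HasDerivAt (deriv f) (deriv (deriv f) x) x := by
    intro f hf
    refine ⟨fun x => ((hf.differentiable (by norm_num)) x).hasDerivAt, fun x => ?_⟩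
    have h1 : ContDiff ℝ 1 (deriv f) := by
      have h2 : ContDiff ℝ (1 + 1) f := by
        rw [one_add_one_eq_two]
        exact hf
      exact (contDiff_succ_iff_deriv.1 h2).2.2
    exact ((h1.differentiable (by norm_num)) x).hasDerivAt
  obtain ⟨hu, hp⟩ := d2 u cu
  obtain ⟨hy, hq⟩ := d2 y cy
  have e1' : ∀ x ∈ Icc (0:ℝ) 1, deriv (deriv u) x = lam ^ 2 * u x - deriv y x :=
    fun x hx => by linear_combination e1 x hx
  have e2' : ∀ x ∈ Icc (0:ℝ) 1,
      deriv (deriv y) x = b * deriv u x + b * y x + lam ^ 2 * y x :=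
    fun x hx => by linear_combination e2 x hx
  have k1c : (k₁ : ℂ) ≠ 0 := by exact_mod_cast hk₁.ne'
  have k3c : (k₃ : ℂ) ≠ 0 := by exact_mod_cast hk₃.ne'
  have one_mem : (1:ℝ) ∈ Icc (0:ℝ) 1 := by simp
  have hlam0 : lam ≠ 0 := by
    rintro rfl
    apply hne
    simp [k1c] at b1
    simp [k3c] at b2
    have w := const_aux (fun x => deriv u x + y x) _ (fun x => (hp x).add (hy x))
      (fun x hx => by rw [e1' x hx]; ring)
    have w0 : ∀ x ∈ Icc (0:ℝ) 1, deriv u x + y x = 0 := fun x hx => by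
      have h1 := w x hx
      have h2 := w 1 one_mem
      rw [h1, ← h2, b1]
    have v := const_aux _ _ hq (fun x hx => by
      rw [e2' x hx]; linear_combination (b : ℂ) * w0 x hx)
    have v0 : ∀ x ∈ Icc (0:ℝ) 1, deriv y x = 0 := fun x hx => by
      rw [v x hx, ← v 1 one_mem, b2]
    have hy0 : ∀ x ∈ Icc (0:ℝ) 1, y x = 0 := fun x hx => by
      rw [const_aux _ _ hy v0 x hx, y0]
    have hu0 : ∀ x ∈ Icc (0:ℝ) 1, u x = 0 := fun x hx => by
      rw [const_aux _ _ hu (fun x hx => by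
        linear_combination w0 x hx - hy0 x hx) x hx, u0]
    exact fun x hx => ⟨hu0 x hx, hy0 x hx⟩
  obtain ⟨A, B, hA, hB, hE⟩ := energy_aux b (lam ^ 2) u y _ _ _ _ hb hu hy hp hq e1' e2' u0 y0
  have hU := Complex.normSq_nonneg (u 1)
  have hY := Complex.normSq_nonneg (y 1)
  have cU : ((Complex.normSq (u 1) : ℝ) : ℂ) = star (u 1) * u 1 :=
    Complex.normSq_eq_conj_mul_self
  have cY : ((Complex.normSq (y 1) : ℝ) : ℂ) = star (y 1) * y 1 :=
    Complex.normSq_eq_conj_mul_self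
  have hpos : 0 < Complex.normSq (u 1) ∨ 0 < Complex.normSq (y 1) := by
    by_contra hc
    push Not at hc
    have u1 : u 1 = 0 := Complex.normSq_eq_zero.1 (le_antisymm hc.1 hU)
    have y1 : y 1 = 0 := Complex.normSq_eq_zero.1 (le_antisymm hc.2 hY)
    simp [u1, y1, k1c] at b1
    simp [y1, k3c] at b2
    exact hne (ode_aux b (lam ^ 2) u y _ _ _ _ hu hy hp hq e1' e2' u1 y1 b1 b2)
  set U := Complex.normSq (u 1)
  set Y := Complex.normSq (y 1)
  have hα : 0 < b * k₃ := by positivity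
  have hS : 0 < b * k₃ * U + k₁ * Y := by
    rcases hpos with h | h
    · have := mul_pos hα h
      have := mul_nonneg hk₁.le hY
      linarith
    · have := mul_pos hk₁ h
      have := mul_nonneg hα.le hU
      linarith
  have hD : 0 < b * k₃ * k₂ * U + k₁ * k₄ * Y := by
    rcases hpos with h | h
    · have : 0 < b * k₃ * k₂ * U := by positivity
      have : 0 ≤ k₁ * k₄ * Y := by positivity
      linarith
    · have : 0 ≤ b * k₃ * k₂ * U := by positivity
      have : 0 < k₁ * k₄ * Y := by positivity
      linarith
  have hKB : 0 ≤ k₁ * k₃ * B := by positivity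
  refine quad_aux (k₁ * k₃ * B + (b * k₃ * U + k₁ * Y)) (b * k₃ * k₂ * U + k₁ * k₄ * Y)
    (k₁ * k₃ * A) (k₂ + k₄) lam (by linarith) hD (by positivity) (by positivity) ?_ hlam0 ?_
  · have h1 : 0 ≤ (k₂ + k₄) * (k₁ * k₃ * B) := by positivity
    have h2 : 0 ≤ k₄ * (b * k₃ * U) := by positivity
    have h3 : 0 ≤ k₂ * (k₁ * Y) := by positivity
    nlinarith
  · push_cast
    rw [cU, cY]
    linear_combination (-(k₁ : ℂ) * k₃) * hE + (b * k₃ * star (u 1)) * b1 + (k₁ * star (y 1)) * b2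
end

section
/- Let a, b > 0 be real constants and λ ∈ ℝ. Suppose u, y : [0,1] → ℂ are twice continuously differentiable and satisfy on [0,1]: u''(x) + y'(x) + λ²u(x) = 0 and a·y''(x) − b·u'(x) − b·y(x) + λ²y(x) = 0, together with the boundary conditions u(0) = y(0) = 0, u(1) = y(1) = 0, u'(1) = y'(1) = 0. Then u and y vanish identically on [0,1]. -/
open Set

/-- No purely imaginary eigenvalues: the overdetermined boundary value problem
obtained from the Timoshenko system with spectral parameter `iλ`, `λ ∈ ℝ`,
has only the trivial solution. -/
theorem overdetermined_bvp_trivial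
    (a b : ℝ) (ha : 0 < a) (hb : 0 < b) (lam : ℝ)
    (u y : ℝ → ℂ) (hu : ContDiff ℝ 2 u) (hy : ContDiff ℝ 2 y)
    (hequ : ∀ x ∈ Icc (0:ℝ) 1,
      deriv (deriv u) x + deriv y x + (lam : ℂ) ^ 2 * u x = 0)
    (heqy : ∀ x ∈ Icc (0:ℝ) 1,
      (a : ℂ) * deriv (deriv y) x - (b : ℂ) * deriv u x - (b : ℂ) * y x
        + (lam : ℂ) ^ 2 * y x = 0)
    (hu0 : u 0 = 0) (hy0 : y 0 = 0)
    (hu1 : u 1 = 0) (hy1 : y 1 = 0)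
    (hu'1 : deriv u 1 = 0) (hy'1 : deriv y 1 = 0) :
    ∀ x ∈ Icc (0:ℝ) 1, u x = 0 ∧ y x = 0 := by
  let p1 : (ℂ × ℂ × ℂ × ℂ) →L[ℂ] ℂ := ContinuousLinearMap.fst ℂ ℂ (ℂ × ℂ × ℂ)
  let r1 : (ℂ × ℂ × ℂ × ℂ) →L[ℂ] (ℂ × ℂ × ℂ) := ContinuousLinearMap.snd ℂ ℂ (ℂ × ℂ × ℂ)
  let p2 : (ℂ × ℂ × ℂ × ℂ) →L[ℂ] ℂ := (ContinuousLinearMap.fst ℂ ℂ (ℂ × ℂ)).comp r1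
  let r2 : (ℂ × ℂ × ℂ × ℂ) →L[ℂ] (ℂ × ℂ) := (ContinuousLinearMap.snd ℂ ℂ (ℂ × ℂ)).comp r1
  let p3 : (ℂ × ℂ × ℂ × ℂ) →L[ℂ] ℂ := (ContinuousLinearMap.fst ℂ ℂ ℂ).comp r2
  let p4 : (ℂ × ℂ × ℂ × ℂ) →L[ℂ] ℂ := (ContinuousLinearMap.snd ℂ ℂ ℂ).comp r2
  let L : (ℂ × ℂ × ℂ × ℂ) →L[ℂ] (ℂ × ℂ × ℂ × ℂ) :=
    p2.prod ((-p4 - ((lam : ℂ) ^ 2) • p1).prod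
      (p4.prod (((b : ℂ) / a) • p2 + (((b : ℂ) - (lam : ℂ) ^ 2) / a) • p3)))
  let F : ℝ → ℂ × ℂ × ℂ × ℂ := fun x => (u x, deriv u x, y x, deriv y x)
  have ha' : (a : ℂ) ≠ 0 := by exact_mod_cast ha.ne'
  have d1 : ∀ w : ℝ → ℂ, ContDiff ℝ 2 w → ∀ x, HasDerivAt w (deriv w x) x := fun w hw x =>
    ((hw.differentiable (by norm_num)) x).hasDerivAt
  have d2 : ∀ w : ℝ → ℂ, ContDiff ℝ 2 w → ∀ x, HasDerivAt (deriv w) (deriv (deriv w) x) x :=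
    fun w hw x => by
      have h : ContDiff ℝ (1 + 1) w := by
        convert hw using 1
        norm_num
      exact ((contDiff_succ_iff_deriv.1 h).2.2.differentiable (by norm_num) x).hasDerivAt
  have hF : ∀ x, HasDerivAt F (deriv u x, deriv (deriv u) x, deriv y x, deriv (deriv y) x) x :=
    fun x => (d1 u hu x).prodMk ((d2 u hu x).prodMk ((d1 y hy x).prodMk (d2 y hy x)))
  have hL : ∀ x ∈ Icc (0:ℝ) 1, HasDerivAt F (L (F x)) x := by
    intro x hx
    convert hF x using 1
    have e1 : deriv (deriv u) x = -deriv y x - (lam : ℂ) ^ 2 * u x := by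
      linear_combination hequ x hx
    have e2 : deriv (deriv y) x
        = (b : ℂ) / a * deriv u x + ((b : ℂ) - (lam : ℂ) ^ 2) / a * y x := by
      field_simp
      linear_combination heqy x hx
    rw [e1, e2]
    rfl
  have key : EqOn F (fun _ => 0) (Icc 0 1) := by
    refine ODE_solution_unique_of_mem_Icc_left (v := fun _ => L) (s := fun _ => univ)
      (K := ‖L‖₊) (fun t _ => L.lipschitz.lipschitzOnWith)
      (fun x _ => (hF x).continuousAt.continuousWithinAt)
      (fun t ht => (hL t (Ioc_subset_Icc_self ht)).hasDerivWithinAt) (fun _ _ => trivial)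
      continuousOn_const (fun t _ => ?_) (fun _ _ => trivial) ?_
    · simpa using hasDerivWithinAt_const t (Iic t) (0 : ℂ × ℂ × ℂ × ℂ)
    · simp [F, hu1, hy1, hu'1, hy'1]
  intro x hx
  have h := key hx
  simp only [F, Prod.mk_eq_zero] at h
  exact ⟨h.1, h.2.2.1⟩
end

section
/- Let b > 0 and k₁, k₃ ∈ ℝ. Define γ₁ := (b + 4(k₁+k₃))/(4π) and γ₂ := (−8b + b² + 8b·k₁ + 8b·k₃ + 64k₁k₃ + 8b·cos(√b) + 16√b·(k₁−k₃)·sin(√b))/(64π²). Then 2π²·(γ₁² − 4γ₂) = b + 2(k₁−k₃)² − b·cos(√b) − 2√b·(k₁−k₃)·sin(√b), this quantity is nonnegative, and γ₁² − 4γ₂ = 0 if and only if k₁ = k₃ and √b = 2pπ for some positive integer p. -/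
open Real

/-- Discriminant identity for the constants `γ₁, γ₂` governing the first-order
correction of the large eigenvalues: an explicit formula for `2π²(γ₁² − 4γ₂)`,
its nonnegativity, and the characterization of its vanishing
(`k₁ = k₃` and `√b = 2pπ`, which is the negation of Condition (C₁)). -/
theorem gamma_discriminant
    (b : ℝ) (hb : 0 < b) (k₁ k₃ : ℝ) :
    let γ₁ := (b + 4 * (k₁ + k₃)) / (4 * π)
    let γ₂ := (-8 * b + b ^ 2 + 8 * b * k₁ + 8 * b * k₃ + 64 * k₁ * k₃
        + 8 * b * Real.cos (Real.sqrt b)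
        + 16 * Real.sqrt b * (k₁ - k₃) * Real.sin (Real.sqrt b)) / (64 * π ^ 2)
    2 * π ^ 2 * (γ₁ ^ 2 - 4 * γ₂)
        = b + 2 * (k₁ - k₃) ^ 2 - b * Real.cos (Real.sqrt b)
          - 2 * Real.sqrt b * (k₁ - k₃) * Real.sin (Real.sqrt b)
      ∧ 0 ≤ γ₁ ^ 2 - 4 * γ₂
      ∧ (γ₁ ^ 2 - 4 * γ₂ = 0 ↔
          (k₁ = k₃ ∧ ∃ p : ℕ, 0 < p ∧ Real.sqrt b = 2 * p * π)) := by
  intro γ₁ γ₂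
  have hpi : 0 < π := Real.pi_pos
  have hs : 0 < Real.sqrt b := Real.sqrt_pos.mpr hb
  have hsq : Real.sqrt b ^ 2 = b := Real.sq_sqrt hb.le
  have key : 2 * π ^ 2 * (γ₁ ^ 2 - 4 * γ₂)
        = b + 2 * (k₁ - k₃) ^ 2 - b * Real.cos (Real.sqrt b)
          - 2 * Real.sqrt b * (k₁ - k₃) * Real.sin (Real.sqrt b) := by
    simp only [γ₁, γ₂]
    field_simp
    ring
  have key2 : 4 * π ^ 2 * (γ₁ ^ 2 - 4 * γ₂)
      = (2 * (k₁ - k₃) - Real.sqrt b * Real.sin (Real.sqrt b)) ^ 2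
        + (Real.sqrt b * (1 - Real.cos (Real.sqrt b))) ^ 2 := by
    have hsc := Real.sin_sq_add_cos_sq (Real.sqrt b)
    linear_combination 2 * key - b * hsc
      - (Real.sin (Real.sqrt b) ^ 2 + (1 - Real.cos (Real.sqrt b)) ^ 2) * hsq
  have hp4 : 0 < 4 * π ^ 2 := by positivity
  refine ⟨key, ?_, ?_, ?_⟩
  · refine nonneg_of_mul_nonneg_right ?_ hp4
    rw [key2]
    positivity
  · intro h0
    rw [h0, mul_zero] at key2
    have h1 : Real.sqrt b * (1 - Real.cos (Real.sqrt b)) = 0 := by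
      apply pow_eq_zero_iff (two_ne_zero) |>.mp
      nlinarith [sq_nonneg (2 * (k₁ - k₃) - Real.sqrt b * Real.sin (Real.sqrt b)),
        sq_nonneg (Real.sqrt b * (1 - Real.cos (Real.sqrt b)))]
    have h2 : 2 * (k₁ - k₃) - Real.sqrt b * Real.sin (Real.sqrt b) = 0 := by
      rw [h1] at key2
      apply pow_eq_zero_iff (two_ne_zero) |>.mp
      linarith
    have hc : Real.cos (Real.sqrt b) = 1 := by
      rcases mul_eq_zero.mp h1 with h | h
      · exact absurd h hs.ne'
      · linarith
    have hS : Real.sin (Real.sqrt b) = 0 := by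
      have hsc := Real.sin_sq_add_cos_sq (Real.sqrt b)
      rw [hc] at hsc
      apply pow_eq_zero_iff (two_ne_zero) |>.mp
      linarith
    refine ⟨by rw [hS] at h2; linarith, ?_⟩
    obtain ⟨n, hn⟩ := (Real.cos_eq_one_iff _).mp hc
    have hnpos : 0 < n := by
      have h3 : (0 : ℝ) < n := by
        rw [← hn] at hs
        exact pos_of_mul_pos_left hs (by positivity)
      exact_mod_cast h3
    lift n to ℕ using hnpos.le
    refine ⟨n, by exact_mod_cast hnpos, ?_⟩
    rw [← hn]
    push_cast
    ring
  · rintro ⟨hk, p, -, hp⟩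
    have hc : Real.cos (Real.sqrt b) = 1 :=
      (Real.cos_eq_one_iff _).mpr ⟨p, by rw [hp]; push_cast; ring⟩
    rw [hc, hk] at key
    have h4 : 2 * π ^ 2 * (γ₁ ^ 2 - 4 * γ₂) = 0 := by
      rw [key]; ring
    rcases mul_eq_zero.mp h4 with h | h
    · exact absurd h (by positivity)
    · exact h
end

section
/- Let b, k₁, k₂, k₃, k₄ > 0 be real constants and assume that k₁ ≠ k₃ or cos(√b) ≠ 1. Define γ₄ := −2b(k₁k₂ + k₃k₄)² − 16k₁k₂k₃k₄(k₁ − k₃)², γ₅ := 2(k₁k₂ + k₃k₄)², γ₆ := (k₁k₂ − k₃k₄)², and γ₇ := 16k₁k₂(k₁ − k₃)k₃k₄. Then γ₄ + γ₅·b·cos(√b) + γ₆·b·sin²(√b) + γ₇·√b·sin(√b) < 0. -/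
open Real

/-- Under Condition (C₁) (`k₁ ≠ k₃` or `cos √b ≠ 1`), the combination
`γ₄ + γ₅ b cos √b + γ₆ b sin²√b + γ₇ √b sin √b` is strictly negative; this is
the key step showing that the coefficients `β₁, β₂` in the eigenvalue
expansions of the dissipative Timoshenko operator are nonzero. -/
theorem gamma_combination_neg
    (b k₁ k₂ k₃ k₄ : ℝ) (hb : 0 < b) (hk₁ : 0 < k₁) (hk₂ : 0 < k₂)
    (hk₃ : 0 < k₃) (hk₄ : 0 < k₄)
    (hC₁ : k₁ ≠ k₃ ∨ Real.cos (Real.sqrt b) ≠ 1) :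
    let γ₄ := -2 * b * (k₁ * k₂ + k₃ * k₄) ^ 2
        - 16 * k₁ * k₂ * k₃ * k₄ * (k₁ - k₃) ^ 2
    let γ₅ := 2 * (k₁ * k₂ + k₃ * k₄) ^ 2
    let γ₆ := (k₁ * k₂ - k₃ * k₄) ^ 2
    let γ₇ := 16 * k₁ * k₂ * (k₁ - k₃) * k₃ * k₄
    γ₄ + γ₅ * b * Real.cos (Real.sqrt b) + γ₆ * b * Real.sin (Real.sqrt b) ^ 2
      + γ₇ * Real.sqrt b * Real.sin (Real.sqrt b) < 0 := by
  intro γ₄ γ₅ γ₆ γ₇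
  have hr : Real.sqrt b ^ 2 = b := Real.sq_sqrt hb.le
  have hs := Real.sin_sq_add_cos_sq (Real.sqrt b)
  simp only [γ₄, γ₅, γ₆, γ₇]
  generalize hR : Real.sqrt b = r at *
  generalize Real.sin r = s at *
  generalize Real.cos r = c at *
  have key : -2 * b * (k₁ * k₂ + k₃ * k₄) ^ 2
        - 16 * k₁ * k₂ * k₃ * k₄ * (k₁ - k₃) ^ 2
        + 2 * (k₁ * k₂ + k₃ * k₄) ^ 2 * b * c + (k₁ * k₂ - k₃ * k₄) ^ 2 * b * s ^ 2
        + 16 * k₁ * k₂ * (k₁ - k₃) * k₃ * k₄ * r * s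
      = -(16 * (k₁ * k₂ * k₃ * k₄) * (k₁ - k₃ - r * s / 2) ^ 2
        + (k₁ * k₂ + k₃ * k₄) ^ 2 * b * (1 - c) ^ 2) := by
    have hs' : s ^ 2 = 1 - c ^ 2 := by linarith
    linear_combination (4 * k₁ * k₂ * k₃ * k₄ * s ^ 2) * hr
      + (k₁ * k₂ + k₃ * k₄) ^ 2 * b * hs'
  rw [key, neg_lt_zero]
  by_cases hc : c = 1
  · have hd : k₁ - k₃ ≠ 0 := sub_ne_zero.mpr (hC₁.resolve_right (not_not.mpr hc))
    have hs0 : s = 0 := by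
      subst hc
      have : s ^ 2 = 0 := by linarith
      exact pow_eq_zero_iff (two_ne_zero) |>.mp this
    have h1 : 0 < (k₁ - k₃) ^ 2 := by positivity
    subst hc hs0
    simp only [mul_zero, zero_div, sub_zero, sub_self]
    positivity
  · have hd : 1 - c ≠ 0 := sub_ne_zero.mpr (Ne.symm hc)
    have h1 : 0 < (1 - c) ^ 2 := by positivity
    positivity
end

section
/- Let p be a positive integer and let k₁, k₂, k₄ > 0 with k₂ ≠ k₄; set k₃ := k₁ and b := 4p²π². Then there exist an integer k₀ ≥ 1 and functions λ¹, λ² : ℤ → ℂ such that for every integer k with |k| ≥ k₀, λ¹(k) and λ²(k) are eigenvalues of the dissipative Timoshenko boundary-feedback problem, and as |k| → ∞: k²·(λ¹(k) − i·k·π − i·(2k₁ + p²π²)/(2kπ)) → −k₁k₂/π² and k²·(λ²(k) − i·k·π − i·(2k₁ + p²π²)/(2kπ)) → −k₁k₄/π². -/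
open Set Real Filter

lemma tsk_cosh (r : ℂ) (x : ℝ) :
    HasDerivAt (fun x : ℝ => Complex.cosh (r * x)) (r * Complex.sinh (r * x)) x := by
  have h1 : HasDerivAt (fun z : ℂ => r * z) r (x : ℂ) := by
    simpa using (hasDerivAt_id (x : ℂ)).const_mul r
  have h2 := ((Complex.hasDerivAt_cosh (r * x)).comp (x : ℂ) h1).comp_ofReal
  rw [mul_comm] at h2
  exact h2

lemma tsk_sinh (r : ℂ) (x : ℝ) :
    HasDerivAt (fun x : ℝ => Complex.sinh (r * x)) (r * Complex.cosh (r * x)) x := by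
  have h1 : HasDerivAt (fun z : ℂ => r * z) r (x : ℂ) := by
    simpa using (hasDerivAt_id (x : ℂ)).const_mul r
  have h2 := ((Complex.hasDerivAt_sinh (r * x)).comp (x : ℂ) h1).comp_ofReal
  rw [mul_comm] at h2
  exact h2

noncomputable def tskF1S (k₁ k₂ β lam r₁ r₂ : ℂ) : ℂ :=
  (lam ^ 2 + k₂ * lam) * (Complex.cosh r₁ - Complex.cosh r₂)
    + k₁ * (r₁ * Complex.sinh r₁ - r₂ * Complex.sinh r₂
      - Complex.I * β * lam * (Complex.sinh r₁ / r₁ + Complex.sinh r₂ / r₂))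

noncomputable def tskF1T (k₁ k₂ lam r₁ r₂ : ℂ) : ℂ :=
  (lam + k₂) * (r₁ * Complex.sinh r₁ + r₂ * Complex.sinh r₂)
    + k₁ * lam * (Complex.cosh r₁ + Complex.cosh r₂)

noncomputable def tskF2S (k₁ k₄ β lam r₁ r₂ : ℂ) : ℂ :=
  -Complex.I * β * lam * ((lam ^ 2 + k₄ * lam) * (Complex.sinh r₁ / r₁ + Complex.sinh r₂ / r₂)
    + k₁ * (Complex.cosh r₁ + Complex.cosh r₂))

noncomputable def tskF2T (k₁ k₄ β lam r₁ r₂ : ℂ) : ℂ :=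
  -Complex.I * β * ((lam ^ 2 + k₄ * lam) * (Complex.cosh r₁ - Complex.cosh r₂)
    + k₁ * (r₁ * Complex.sinh r₁ - r₂ * Complex.sinh r₂))

noncomputable def tskDet (k₁ k₂ k₄ β lam r₁ r₂ : ℂ) : ℂ :=
  tskF1S k₁ k₂ β lam r₁ r₂ * tskF2T k₁ k₄ β lam r₁ r₂
    - tskF1T k₁ k₂ lam r₁ r₂ * tskF2S k₁ k₄ β lam r₁ r₂

lemma tsk_kernel (a b c d : ℂ) (h : a * d - b * c = 0) :
    ∃ A B : ℂ, (A ≠ 0 ∨ B ≠ 0) ∧ a * A + b * B = 0 ∧ c * A + d * B = 0 := by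
  by_cases hab : a ≠ 0 ∨ b ≠ 0
  · refine ⟨b, -a, ?_, by ring, by linear_combination -h⟩
    rcases hab with h | h
    · right; simpa using h
    · left; exact h
  · push Not at hab
    obtain ⟨rfl, rfl⟩ := hab
    by_cases hcd : c ≠ 0 ∨ d ≠ 0
    · refine ⟨d, -c, ?_, by ring, by ring⟩
      rcases hcd with h | h
      · right; simpa using h
      · left; exact h
    · push Not at hcd
      obtain ⟨rfl, rfl⟩ := hcd
      exact ⟨1, 0, by simp, by simp, by simp⟩

lemma tsk_eig (b k₁ k₂ k₄ : ℝ) (β lam r₁ r₂ : ℂ) (hb : (b : ℂ) = β ^ 2)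
    (h₁ : r₁ ^ 2 = lam ^ 2 + Complex.I * β * lam) (h₂ : r₂ ^ 2 = lam ^ 2 - Complex.I * β * lam)
    (hl : lam ≠ 0) (hβ : β ≠ 0) (hr₁ : r₁ ≠ 0) (hr₂ : r₂ ≠ 0)
    (hdet : tskDet k₁ k₂ k₄ β lam r₁ r₂ = 0) :
    IsDissipativeEigenvalue b k₁ k₂ k₁ k₄ lam := by
  obtain ⟨A, B₀, hAB, e1, e2⟩ := tsk_kernel _ _ _ _ hdet
  obtain ⟨B, rfl⟩ : ∃ B, B₀ = lam * B := ⟨B₀ / lam, by field_simp⟩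
  have hI : Complex.I ^ 2 = -1 := Complex.I_sq
  set u : ℝ → ℂ := fun x => A * (Complex.cosh (r₁ * x) - Complex.cosh (r₂ * x))
    + B * (r₁ * Complex.sinh (r₁ * x) + r₂ * Complex.sinh (r₂ * x)) with hu
  set y : ℝ → ℂ := fun x => -Complex.I * β * (A * lam * (Complex.sinh (r₁ * x) / r₁
    + Complex.sinh (r₂ * x) / r₂)
    + lam * B * (Complex.cosh (r₁ * x) - Complex.cosh (r₂ * x))) with hy
  set u' : ℝ → ℂ := fun x => A * (r₁ * Complex.sinh (r₁ * x) - r₂ * Complex.sinh (r₂ * x))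
    + B * (r₁ * (r₁ * Complex.cosh (r₁ * x)) + r₂ * (r₂ * Complex.cosh (r₂ * x))) with hu'
  set y' : ℝ → ℂ := fun x => -Complex.I * β * (A * lam * (r₁ * Complex.cosh (r₁ * x) / r₁
    + r₂ * Complex.cosh (r₂ * x) / r₂)
    + lam * B * (r₁ * Complex.sinh (r₁ * x) - r₂ * Complex.sinh (r₂ * x))) with hy'
  have du : ∀ x, HasDerivAt u (u' x) x := fun x =>
    (((tsk_cosh r₁ x).sub (tsk_cosh r₂ x)).const_mul A).add
      ((((tsk_sinh r₁ x).const_mul r₁).add ((tsk_sinh r₂ x).const_mul r₂)).const_mul (B))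
  have dy : ∀ x, HasDerivAt y (y' x) x := fun x =>
    (((((tsk_sinh r₁ x).div_const r₁).add ((tsk_sinh r₂ x).div_const r₂)).const_mul (A * lam)).add
      (((tsk_cosh r₁ x).sub (tsk_cosh r₂ x)).const_mul (lam * B))).const_mul (-Complex.I * β)
  have du' : ∀ x : ℝ, HasDerivAt u' (A * (r₁ * (r₁ * Complex.cosh (r₁ * x))
      - r₂ * (r₂ * Complex.cosh (r₂ * x)))
      + B * (r₁ * (r₁ * (r₁ * Complex.sinh (r₁ * x)))
      + r₂ * (r₂ * (r₂ * Complex.sinh (r₂ * x))))) x := fun x =>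
    ((((tsk_sinh r₁ x).const_mul r₁).sub ((tsk_sinh r₂ x).const_mul r₂)).const_mul A).add
      (((((tsk_cosh r₁ x).const_mul r₁).const_mul r₁).add
        (((tsk_cosh r₂ x).const_mul r₂).const_mul r₂)).const_mul (B))
  have dy' : ∀ x : ℝ, HasDerivAt y' (-Complex.I * β * (A * lam * (r₁ * (r₁ * Complex.sinh (r₁ * x)) / r₁
    + r₂ * (r₂ * Complex.sinh (r₂ * x)) / r₂)
    + lam * B * (r₁ * (r₁ * Complex.cosh (r₁ * x)) - r₂ * (r₂ * Complex.cosh (r₂ * x))))) x := fun x =>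
    ((((((tsk_cosh r₁ x).const_mul r₁).div_const r₁).add
      (((tsk_cosh r₂ x).const_mul r₂).div_const r₂)).const_mul (A * lam)).add
      ((((tsk_sinh r₁ x).const_mul r₁).sub ((tsk_sinh r₂ x).const_mul r₂)).const_mul (lam * B))).const_mul
        (-Complex.I * β)
  have eu : deriv u = u' := funext fun x => (du x).deriv
  have ey : deriv y = y' := funext fun x => (dy x).deriv
  have smc : ∀ r : ℂ, ContDiff ℝ 2 (fun x : ℝ => Complex.cosh (r * x)) := fun r =>
    (Complex.contDiff_cosh.restrict_scalars ℝ).comp (contDiff_const.mul Complex.ofRealCLM.contDiff)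
  have sms : ∀ r : ℂ, ContDiff ℝ 2 (fun x : ℝ => Complex.sinh (r * x)) := fun r =>
    (Complex.contDiff_sinh.restrict_scalars ℝ).comp (contDiff_const.mul Complex.ofRealCLM.contDiff)
  refine ⟨u, y, ?_, ?_, ?_, ?_, ?_, ?_, ?_, ?_, ?_⟩
  · exact (contDiff_const.mul ((smc r₁).sub (smc r₂))).add
      (contDiff_const.mul ((contDiff_const.mul (sms r₁)).add (contDiff_const.mul (sms r₂))))
  · exact contDiff_const.mul ((contDiff_const.mul (((sms r₁).div_const _).add
      ((sms r₂).div_const _))).add (contDiff_const.mul ((smc r₁).sub (smc r₂))))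
  · intro h0
    have key : ∀ f : ℝ → ℂ, ∀ f' : ℂ, HasDerivAt f f' 0 → (∀ x ∈ Icc (0:ℝ) 1, f x = 0) → f' = 0 := by
      intro f f' hf hz
      have hun : UniqueDiffWithinAt ℝ (Icc (0:ℝ) 1) 0 :=
        uniqueDiffOn_Icc (by norm_num) 0 (by simp)
      have h1 : HasDerivWithinAt f 0 (Icc (0:ℝ) 1) 0 :=
        (hasDerivWithinAt_const (0:ℝ) (Icc (0:ℝ) 1) (0:ℂ)).congr hz (hz 0 (by simp))
      exact hun.eq_deriv _ hf.hasDerivWithinAt h1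
    have hu0 := key u _ (du 0) (fun x hx => (h0 x hx).1)
    have hy0 := key y _ (dy 0) (fun x hx => (h0 x hx).2)
    simp [hu', hy', hr₁, hr₂, hβ, hl] at hu0 hy0
    have hA : A = 0 := by
      simpa using hy0
    have hB : B = 0 := by
      rcases hu0 with h | h
      · exact h
      · exfalso
        have : 2 * lam ^ 2 = 0 := by linear_combination h - h₁ - h₂
        simp [hl] at this
    rcases hAB with h | h
    · exact h hA
    · exact h (by simp [hB])
  · intro x _
    rw [eu, ey, (du' x).deriv]
    simp only [hu, hy', mul_div_cancel_left₀ _ hr₁, mul_div_cancel_left₀ _ hr₂]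
    linear_combination (Complex.cosh (r₁ * x) * A + B * r₁ * Complex.sinh (r₁ * x)) * h₁
      + (-Complex.cosh (r₂ * x) * A + B * r₂ * Complex.sinh (r₂ * x)) * h₂
  · intro x _
    rw [eu, ey, (dy' x).deriv, hb]
    simp only [hy, hu']
    obtain ⟨a₁, ha₁⟩ : ∃ a, Complex.sinh (r₁ * x) = r₁ * a := ⟨Complex.sinh (r₁ * x) / r₁, by field_simp⟩
    obtain ⟨a₂, ha₂⟩ : ∃ a, Complex.sinh (r₂ * x) = r₂ * a := ⟨Complex.sinh (r₂ * x) / r₂, by field_simp⟩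
    simp only [ha₁, ha₂, mul_div_cancel_left₀ _ hr₁, mul_div_cancel_left₀ _ hr₂]
    generalize Complex.cosh (r₁ * x) = C₁
    generalize Complex.cosh (r₂ * x) = C₂
    linear_combination (-Complex.I * β * (A * lam * a₁ + lam * B * C₁) - β ^ 2 * (A * a₁ + B * C₁)) * h₁
      + (-Complex.I * β * (A * lam * a₂ - lam * B * C₂) - β ^ 2 * (-A * a₂ + B * C₂)) * h₂
      - β ^ 2 * lam ^ 2 * (A * (a₁ - a₂) + B * (C₁ + C₂)) * hI
  · simp [hu]
  · simp [hy]
  · rw [eu]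
    simp only [hu, hy, hu', tskF1S, tskF1T, Complex.ofReal_one, mul_one] at e1 ⊢
    linear_combination e1 + k₁ * B * (Complex.cosh r₁ * h₁ + Complex.cosh r₂ * h₂)
  · rw [ey]
    simp only [hy, hy', tskF2S, tskF2T, Complex.ofReal_one, mul_one,
      mul_div_cancel_left₀ _ hr₁, mul_div_cancel_left₀ _ hr₂] at e2 ⊢
    linear_combination e2

lemma tsk_hurwitz {ι : Type*} {l : Filter ι} (D : ι → ℂ → ℂ) (G : ℂ → ℂ) (w₀ : ℂ)
    (hD : ∀ w₁, Tendsto (fun q : ι × ℂ => D q.1 q.2) (l ×ˢ nhds w₁) (nhds (G w₁)))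
    (hdiff : ∀ w₁, ∀ᶠ q : ι × ℂ in l ×ˢ nhds w₁, DifferentiableAt ℂ (D q.1) q.2)
    (hG : Continuous G) (h0 : G w₀ = 0) (r : ℝ) (hr : 0 < r)
    (hne : ∀ w ∈ Metric.sphere w₀ r, G w ≠ 0) :
    ∀ᶠ k in l, ∃ w ∈ Metric.closedBall w₀ r, D k w = 0 := by
  have hcS : IsCompact (Metric.sphere w₀ r) := isCompact_sphere w₀ r
  have hcB : IsCompact (Metric.closedBall w₀ r) := isCompact_closedBall w₀ r
  have hSne : (Metric.sphere w₀ r).Nonempty := NormedSpace.sphere_nonempty.2 hr.le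
  obtain ⟨wm, hwm, hmin⟩ := hcS.exists_isMinOn hSne (hG.norm.continuousOn)
  set m := ‖G wm‖ with hm
  have hmpos : 0 < m := norm_pos_iff.2 (hne wm hwm)
  have hd : ∀ᶠ k in l, ∀ w ∈ Metric.closedBall w₀ r, DifferentiableAt ℂ (D k) w := by
    have := hcB.mem_prod_nhdsSet_of_forall (l := l)
      (s := {q : ι × ℂ | DifferentiableAt ℂ (D q.1) q.2}) (fun y _ => hdiff y)
    exact (Eventually.curry this).mono fun _ h => h.self_of_nhdsSet
  have hs : ∀ᶠ k in l, ∀ w ∈ Metric.sphere w₀ r, 3 * m / 4 < ‖D k w‖ := by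
    have := hcS.mem_prod_nhdsSet_of_forall (l := l)
      (s := {q : ι × ℂ | 3 * m / 4 < ‖D q.1 q.2‖}) (fun y hy => by
        refine (hD y).norm.eventually_const_lt ?_
        have h1 : m ≤ ‖G y‖ := hmin hy
        linarith)
    exact (Eventually.curry this).mono fun _ h => h.self_of_nhdsSet
  have h00 : ∀ᶠ k in l, ‖D k w₀‖ < m / 4 := by
    have h1 : Tendsto (fun k => D k w₀) l (nhds (G w₀)) :=
      (hD w₀).comp (tendsto_id.prodMk (tendsto_const_nhds))
    refine h1.norm.eventually_lt_const ?_
    rw [h0]; simp; exact hmpos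
  filter_upwards [hd, hs, h00] with k hd hs h00
  have hdc : DiffContOnCl ℂ (D k) (Metric.ball w₀ r) := by
    refine DifferentiableOn.diffContOnCl ?_
    rw [closure_ball w₀ hr.ne']
    exact fun w hw => (hd w hw).differentiableWithinAt
  have hlow : ∀ z ∈ Metric.sphere w₀ r, m / 2 ≤ ‖D k z - D k w₀‖ := by
    intro z hz
    have h1 := hs z hz
    have h2 := norm_sub_norm_le (D k z) (D k w₀)
    linarith
  have hfr : ∃ᶠ z in nhds w₀, D k z ≠ D k w₀ := by
    intro hcon
    have hev : ∀ᶠ z in nhds w₀, D k z = D k w₀ := hcon.mono fun z hz => not_not.1 hz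
    have hb : DifferentiableOn ℂ (D k) (Metric.ball w₀ r) :=
      fun w hw => (hd w (Metric.ball_subset_closedBall hw)).differentiableWithinAt
    have han : AnalyticOnNhd ℂ (D k) (Metric.ball w₀ r) := hb.analyticOnNhd Metric.isOpen_ball
    have heq : EqOn (D k) (fun _ => D k w₀) (Metric.ball w₀ r) :=
      han.eqOn_of_preconnected_of_eventuallyEq analyticOnNhd_const
        (convex_ball w₀ r).isPreconnected (Metric.mem_ball_self hr) hev
    have hcl : EqOn (D k) (fun _ => D k w₀) (closure (Metric.ball w₀ r)) :=
      heq.of_subset_closure (hdc.continuousOn) continuousOn_const subset_closure subset_rfl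
    rw [closure_ball w₀ hr.ne'] at hcl
    have h1 := hcl (Metric.sphere_subset_closedBall hwm)
    have h2 := hlow wm hwm
    simp only at h1
    rw [h1] at h2
    simp at h2
    linarith
  have := hdc.ball_subset_image_closedBall hr hlow hfr
  have h0m : (0 : ℂ) ∈ Metric.ball (D k w₀) (m / 2 / 2) := by
    rw [mem_ball_iff_norm]; simp; linarith
  obtain ⟨w, hw, hw'⟩ := this h0m
  exact ⟨w, hw, hw'⟩

lemma tsk_select (P : ℤ → ℂ → Prop) (w₀ : ℂ) (R : ℝ) (hR : 0 < R)
    (h : ∀ r : ℝ, 0 < r → r < R → ∀ᶠ k in cocompact ℤ, ∃ w ∈ Metric.closedBall w₀ r, P k w) :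
    ∃ w : ℤ → ℂ, Tendsto w (cocompact ℤ) (nhds w₀) ∧ ∀ᶠ k in cocompact ℤ, P k (w k) := by
  have hex : ∀ k : ℤ, ∃ w : ℂ, (∃ w', P k w') →
      P k w ∧ ∀ w', P k w' → dist w w₀ ≤ dist w' w₀ + (‖k‖ + 1)⁻¹ := by
    intro k
    by_cases hk : ∃ w', P k w'
    · set S := (fun w => dist w w₀) '' {w | P k w} with hS
      have hSn : S.Nonempty := by
        obtain ⟨w', hw'⟩ := hk; exact ⟨_, w', hw', rfl⟩
      have hSb : BddBelow S := ⟨0, by rintro _ ⟨w, _, rfl⟩; exact dist_nonneg⟩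
      have hpos : 0 < (‖k‖ + 1)⁻¹ := by positivity
      obtain ⟨_, ⟨w, hw, rfl⟩, hlt⟩ := exists_lt_of_csInf_lt hSn
        (show sInf S < sInf S + (‖k‖ + 1)⁻¹ by linarith)
      refine ⟨w, fun _ => ⟨hw, fun w' hw' => ?_⟩⟩
      have : sInf S ≤ dist w' w₀ := csInf_le hSb ⟨w', hw', rfl⟩
      simp only at hlt
      linarith
    · exact ⟨0, fun h => absurd h hk⟩
  choose w hw using hex
  refine ⟨w, ?_, ?_⟩
  · have hlim : Tendsto (fun k : ℤ => (‖k‖ + 1)⁻¹) (cocompact ℤ) (nhds 0) :=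
      tendsto_inv_atTop_zero.comp
        (tendsto_atTop_add_const_right _ 1 (tendsto_norm_cocompact_atTop (E := ℤ)))
    rw [Metric.tendsto_nhds]
    intro ε hε
    have hm : 0 < min (ε / 2) (R / 2) := by positivity
    have h1 := h (min (ε / 2) (R / 2)) hm
      (lt_of_le_of_lt (min_le_right _ _) (by linarith))
    filter_upwards [h1, hlim.eventually_lt_const (show 0 < ε / 2 by linarith)] with k hk hk2
    obtain ⟨w', hw', hP⟩ := hk
    have h2 := (hw k ⟨w', hP⟩).2 w' hP
    have h3 : dist w' w₀ ≤ ε / 2 := (Metric.mem_closedBall.1 hw').trans (min_le_left _ _)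
    linarith
  · filter_upwards [h (R / 2) (by linarith) (by linarith)] with k hk
    obtain ⟨w', hw', hP⟩ := hk
    exact (hw k ⟨w', hP⟩).1

noncomputable def tskSg (z : ℂ) : ℂ := (1 + z) ^ (((2 : ℕ) : ℂ)⁻¹) + (1 - z) ^ (((2 : ℕ) : ℂ)⁻¹)

lemma tskSg_quartic (z : ℂ) : tskSg z ^ 4 - 4 * tskSg z ^ 2 + 4 * z ^ 2 = 0 := by
  have h1 := Complex.cpow_nat_inv_pow (1 + z) two_ne_zero
  have h2 := Complex.cpow_nat_inv_pow (1 - z) two_ne_zero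
  unfold tskSg
  generalize (1 + z) ^ (((2 : ℕ) : ℂ)⁻¹) = a at *
  generalize (1 - z) ^ (((2 : ℕ) : ℂ)⁻¹) = b at *
  have hz : z = (a ^ 2 - b ^ 2) / 2 := by rw [h1, h2]; ring
  have hb : b ^ 2 = 2 - a ^ 2 := by rw [h1, h2]; ring
  have e : (a + b) ^ 4 - 4 * (a + b) ^ 2 + (a ^ 2 - b ^ 2) ^ 2
    = 2 * (a + b) ^ 2 * (a ^ 2 + b ^ 2 - 2) := by ring
  rw [hz]
  linear_combination e + 2 * (a + b) ^ 2 * hb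

lemma tskSg_zero : tskSg 0 = 2 := by
  simp [tskSg]; norm_num

lemma tskSg_diff (z : ℂ) (hz : ‖z‖ < 1) : DifferentiableAt ℂ tskSg z := by
  have hre : |z.re| < 1 := (Complex.abs_re_le_norm z).trans_lt hz
  have := abs_lt.1 hre
  unfold tskSg
  refine DifferentiableAt.add ?_ ?_
  · refine DifferentiableAt.cpow_const (by fun_prop) ?_
    left; simp; linarith
  · refine DifferentiableAt.cpow_const (by fun_prop) ?_
    left; simp; linarith

/-- The quotient `sinh z / z`, extended by `1` at `0`. -/
noncomputable def tskShc (z : ℂ) : ℂ := dslope Complex.sinh 0 z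

lemma tskShc_mul (z : ℂ) : Complex.sinh z = z * tskShc z := by
  have := sub_smul_dslope Complex.sinh 0 z
  simpa [tskShc] using this.symm

lemma tskShc_tendsto : Tendsto tskShc (nhds 0) (nhds 1) := by
  have : ContinuousAt (dslope Complex.sinh 0) 0 :=
    continuousAt_dslope_same.2 Complex.differentiable_sinh.differentiableAt
  have h := this.tendsto
  rw [dslope_same] at h
  simp only [Complex.deriv_sinh, Complex.cosh_zero] at h
  exact h

/-- The quotient `(sinh z - z cosh z) / z ^ 2`. -/
noncomputable def tskG (z : ℂ) : ℂ := (Complex.sinh z - z * Complex.cosh z) / z ^ 2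

lemma tskG_mul (z : ℂ) : Complex.sinh z = z * Complex.cosh z + z ^ 2 * tskG z := by
  by_cases hz : z = 0
  · simp [hz]
  · unfold tskG; field_simp; ring

lemma tskG_tendsto : Tendsto tskG (nhds 0) (nhds 0) := by
  have h : (fun z : ℂ => Complex.sinh z - z * Complex.cosh z) =o[nhds 0] (fun z : ℂ => z ^ 2) := by
    have hE := (Complex.exp_sub_sum_range_succ_isLittleO_pow 2)
    have hE' := hE.comp_tendsto (show Tendsto (fun z : ℂ => -z) (nhds 0) (nhds 0) by
      simpa using (continuous_neg.tendsto (0:ℂ)))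
    have c1 : (fun z : ℂ => (1 - z) / 2) =O[nhds 0] (fun _ : ℂ => (1 : ℂ)) :=
      (show Continuous (fun z : ℂ => (1 - z) / 2) by fun_prop).continuousAt.isBigO_one ℂ
    have c2 : (fun z : ℂ => (1 + z) / 2) =O[nhds 0] (fun _ : ℂ => (1 : ℂ)) :=
      (show Continuous (fun z : ℂ => (1 + z) / 2) by fun_prop).continuousAt.isBigO_one ℂ
    have c3 : (fun z : ℂ => z ^ 3) =o[nhds 0] (fun z : ℂ => z ^ 2) :=
      Asymptotics.isLittleO_pow_pow (by norm_num)
    have hs := ((c1.mul_isLittleO hE).sub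
      ((c2.mul_isLittleO hE').congr_right (fun z => by
        show (1 : ℂ) * (-z) ^ 2 = 1 * z ^ 2
        ring))).sub ((c3.const_mul_left (1 / 2)).congr_right (fun z => (one_mul _).symm))
    refine (hs.congr_right (fun z => one_mul _)).congr_left (fun z => ?_)
    simp only [Function.comp, Finset.sum_range_succ, Finset.sum_range_zero, Complex.sinh,
      Complex.cosh]
    norm_num [Nat.factorial]
    ring
  exact (Asymptotics.isLittleO_iff_tendsto (by simp)).1 h

lemma tsk_alg (e L M δ V N W a c g bb d k₁ k₂ k₄ β s ii lam r₁ r₂ C₁ C₂ S₁ S₂ sv sh qq : ℂ)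
    (he : e ≠ 0) (hr₁ : r₁ ≠ 0) (hr₂ : r₂ ≠ 0)
    (hlam : lam = L / e) (h₁ : r₁ = M / e + δ) (h₂ : r₂ = M / e - δ)
    (hC₁ : C₁ = s * (c * d + sv * sh)) (hC₂ : C₂ = s * (c * d - sv * sh))
    (hS₁ : S₁ = s * (sv * d + c * sh)) (hS₂ : S₂ = s * (sv * d - c * sh))
    (hsv : sv = e * V * a) (hsv' : sv = e * V * c + (e * V) ^ 2 * g) (hsh : sh = e ^ 2 * N * bb)
    (hW : e * W = M * V + k₁) (hqq : qq * (M ^ 2 - e ^ 2 * δ ^ 2) = 1)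
    (hL : L ^ 2 = M ^ 2 + e ^ 2 * δ ^ 2) :
    ((lam ^ 2 + k₂ * lam) * (C₁ - C₂)
      + k₁ * (r₁ * S₁ - r₂ * S₂ - ii * β * lam * (S₁ / r₁ + S₂ / r₂))
      = s * (2 * e * (L * V * a * L * N * bb + k₂ * L * V * a * e * N * bb
        + k₁ * (M * c * N * bb + δ * d * V * a
          - ii * β * (L * qq * M * V * a * d - L * qq * δ * c * e ^ 2 * N * bb))))) ∧
    ((lam + k₂) * (r₁ * S₁ + r₂ * S₂) + k₁ * lam * (C₁ + C₂)
      = s * (2 * (d * L * M * V ^ 2 * g + δ * c * e * L * N * bb + k₂ * d * M * V * a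
        + k₂ * δ * c * e ^ 2 * N * bb + c * d * L * W))) ∧
    (-ii * β * lam * ((lam ^ 2 + k₄ * lam) * (S₁ / r₁ + S₂ / r₂) + k₁ * (C₁ + C₂))
      = s * (-2 * ii * β * ((L ^ 2 * qq) * L * M * V ^ 2 * g * d
        + (L * W + e * (2 * δ ^ 2 * qq) * L * M * V) * c * d + (L ^ 2 * qq) * k₄ * M * V * a * d
        - (L ^ 2 * qq) * δ * c * e * L * N * bb
        - (L ^ 2 * qq) * k₄ * δ * c * e ^ 2 * N * bb))) ∧
    (-ii * β * ((lam ^ 2 + k₄ * lam) * (C₁ - C₂) + k₁ * (r₁ * S₁ - r₂ * S₂))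
      = s * (-2 * ii * β * e * (L * V * a * L * N * bb + k₄ * L * V * a * e * N * bb
        + k₁ * (M * c * N * bb + δ * d * V * a)))) := by
  obtain ⟨q, hq⟩ : ∃ q, q = e ^ 2 * qq := ⟨_, rfl⟩
  obtain ⟨μ, hμ⟩ : ∃ μ, μ = M / e := ⟨_, rfl⟩
  rw [← hμ] at h₁ h₂
  have hqr : q * (r₁ * r₂) = 1 := by
    rw [hq, h₁, h₂, hμ]
    field_simp
    linear_combination hqq
  have B0 : S₁ / r₁ + S₂ / r₂ = s * 2 * (μ * sv * d - δ * c * sh) * q := by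
    field_simp
    rw [hS₁, hS₂]
    have : s * (sv * d + c * sh) * r₂ + r₁ * (s * (sv * d - c * sh))
      = s * 2 * (μ * sv * d - δ * c * sh) := by rw [h₁, h₂]; ring
    linear_combination this - s * 2 * (μ * sv * d - δ * c * sh) * hqr
  have A1 : lam * μ * sv = L * M * V ^ 2 * g + lam * M * V * c := by
    rw [hsv', hlam, hμ]; field_simp; ring
  have A2 : lam * sh = e * L * N * bb := by rw [hsh, hlam]; field_simp
  have A3 : μ * sv = M * V * a := by rw [hsv, hμ]; field_simp
  have A6 : lam * e = L := by rw [hlam]; field_simp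
  have A4 : lam * (M * V + k₁) = L * W := by rw [← hW, ← A6]; ring
  have A5 := hsh
  have B1 : lam ^ 2 * q = L ^ 2 * qq := by rw [hq, ← A6]; ring
  have B2 : L ^ 2 * qq = 1 + e ^ 2 * (2 * δ ^ 2 * qq) := by linear_combination qq * hL + hqq
  have D1 : lam * sv = L * V * a := by rw [hsv, hlam]; field_simp
  have D2 : μ * sh = e * M * N * bb := by rw [hsh, hμ]; field_simp
  have D4 : lam * q = e * L * qq := by rw [hq, ← A6]; ring
  obtain ⟨κ, hκ⟩ : ∃ κ, κ = L ^ 2 * qq := ⟨_, rfl⟩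
  rw [← hκ] at B1 B2 ⊢
  rw [B0]
  clear hκ hqr hqq hL hlam hμ hq hsv' B0
  refine ⟨?_, ?_, ?_, ?_⟩
  · rw [hC₁, hC₂, hS₁, hS₂, h₁, h₂]
    linear_combination 2 * s * (lam * sv * A2 + e * L * N * bb * D1 + k₂ * sh * D1
      + k₂ * L * V * a * A5 + k₁ * c * D2 + k₁ * δ * d * hsv
      - k₁ * ii * β * (d * lam * q * A3 + d * M * V * a * D4 - δ * c * sh * D4
        - e * L * qq * δ * c * A5))
  · rw [hC₁, hC₂, hS₁, hS₂, h₁, h₂]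
    linear_combination 2 * s * (d*A1 + δ*c*A2 + k₂*d*A3 + k₂*δ*c*A5 + c*d*A4)
  · rw [hC₁, hC₂]
    linear_combination -2 * ii * β * s * (lam * μ * sv * d * B1 + κ * d * A1 - lam * sh * δ * c * B1
      - κ * δ * c * A2 + k₄ * μ * sv * d * B1 + κ * k₄ * d * A3 - k₄ * δ * c * sh * B1
      - κ * k₄ * δ * c * A5 + d * lam * M * V * c * B2 + c * d * A4
      + e * (2 * δ ^ 2 * qq) * M * V * c * d * A6)
  · rw [hC₁, hC₂, hS₁, hS₂, h₁, h₂]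
    linear_combination -2 * ii * β * s * (lam * sv * A2 + e * L * N * bb * D1 + k₄ * sh * D1
      + k₄ * L * V * a * A5 + k₁ * c * D2 + k₁ * δ * d * hsv)

lemma tsk_sign (n : ℤ) (x : ℂ) :
    Complex.cosh (x + n * π * Complex.I) = Complex.cos (n * π) * Complex.cosh x ∧
    Complex.sinh (x + n * π * Complex.I) = Complex.cos (n * π) * Complex.sinh x := by
  have h1 : Complex.sin (n * π) = 0 := Complex.sin_int_mul_pi n
  constructor
  · rw [Complex.cosh_add, Complex.cosh_mul_I, Complex.sinh_mul_I, h1]; ring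
  · rw [Complex.sinh_add, Complex.cosh_mul_I, Complex.sinh_mul_I, h1]; ring

lemma tsk_sign_sq (n : ℤ) : Complex.cos (n * π) ^ 2 = 1 := by
  have h1 : Complex.sin (n * π) = 0 := Complex.sin_int_mul_pi n
  have := Complex.sin_sq_add_cos_sq (n * π)
  rw [h1] at this
  linear_combination this

/-- The four hyperbolic functions at `kπi + ν ± (pπi + η)`. -/
lemma tsk_hyp (k p : ℤ) (ν η : ℂ) : ∃ s : ℂ, s ^ 2 = 1 ∧
    ∀ r₁ r₂ : ℂ, r₁ = (ν + η) + k * π * Complex.I + p * π * Complex.I →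
      r₂ = (ν - η) + k * π * Complex.I - p * π * Complex.I →
    Complex.cosh r₁ = s * (Complex.cosh ν * Complex.cosh η + Complex.sinh ν * Complex.sinh η) ∧
    Complex.cosh r₂ = s * (Complex.cosh ν * Complex.cosh η - Complex.sinh ν * Complex.sinh η) ∧
    Complex.sinh r₁ = s * (Complex.sinh ν * Complex.cosh η + Complex.cosh ν * Complex.sinh η) ∧
    Complex.sinh r₂ = s * (Complex.sinh ν * Complex.cosh η - Complex.cosh ν * Complex.sinh η) := by
  refine ⟨Complex.cos (k * π) * Complex.cos (p * π), ?_, ?_⟩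
  · rw [mul_pow, tsk_sign_sq, tsk_sign_sq, one_mul]
  · rintro r₁ r₂ rfl rfl
    have e2 : (ν - η) + k * π * Complex.I - p * π * Complex.I
      = (ν - η) + k * π * Complex.I + ((-p : ℤ) : ℂ) * π * Complex.I := by push_cast; ring
    have e3 : Complex.cos (((-p : ℤ) : ℂ) * π) = Complex.cos (p * π) := by
      push_cast; rw [neg_mul, Complex.cos_neg]
    rw [e2, (tsk_sign p _).1, (tsk_sign p _).2, (tsk_sign (-p) _).1, (tsk_sign (-p) _).2,
      (tsk_sign k _).1, (tsk_sign k _).2, (tsk_sign k _).1, (tsk_sign k _).2, e3,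
      Complex.cosh_add, Complex.sinh_add, Complex.cosh_sub, Complex.sinh_sub]
    refine ⟨?_, ?_, ?_, ?_⟩ <;> ring

noncomputable def tskY (p : ℕ) (k₁ : ℝ) (x : ℂ × ℂ) : ℂ :=
  Complex.I * (2 * k₁ + p ^ 2 * π ^ 2) / (2 * π) + x.2 * x.1

noncomputable def tskL (p : ℕ) (k₁ : ℝ) (x : ℂ × ℂ) : ℂ :=
  Complex.I * π + x.1 ^ 2 * tskY p k₁ x

noncomputable def tskZ (p : ℕ) (k₁ : ℝ) (x : ℂ × ℂ) : ℂ :=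
  Complex.I * (2 * p * π) * x.1 / tskL p k₁ x

noncomputable def tskSig (p : ℕ) (k₁ : ℝ) (x : ℂ × ℂ) : ℂ := tskSg (tskZ p k₁ x)

noncomputable def tskM (p : ℕ) (k₁ : ℝ) (x : ℂ × ℂ) : ℂ := tskL p k₁ x * tskSig p k₁ x / 2

noncomputable def tskDel (p : ℕ) (k₁ : ℝ) (x : ℂ × ℂ) : ℂ :=
  Complex.I * (2 * p * π) / tskSig p k₁ x

noncomputable def tskD (p : ℕ) (k₁ k₂ k₄ : ℝ) (x : ℂ × ℂ) : ℂ :=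
  tskDet k₁ k₂ k₄ (2 * p * π) (tskL p k₁ x / x.1)
    (tskM p k₁ x / x.1 + tskDel p k₁ x) (tskM p k₁ x / x.1 - tskDel p k₁ x)

/-- Points where all the denominators are nonzero. -/
def tskGood (p : ℕ) (k₁ : ℝ) (x : ℂ × ℂ) : Prop :=
  ‖tskZ p k₁ x‖ < 1 ∧ tskL p k₁ x ≠ 0 ∧ tskSig p k₁ x ≠ 0 ∧ tskSig p k₁ x + 2 ≠ 0 ∧
    tskM p k₁ x + x.1 * tskDel p k₁ x ≠ 0 ∧ tskM p k₁ x - x.1 * tskDel p k₁ x ≠ 0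

lemma tsk_pi : (π : ℂ) ≠ 0 := by exact_mod_cast Real.pi_ne_zero

lemma tskL0 (p : ℕ) (k₁ : ℝ) (w : ℂ) : tskL p k₁ (0, w) = Complex.I * π := by simp [tskL]
lemma tskZ0 (p : ℕ) (k₁ : ℝ) (w : ℂ) : tskZ p k₁ (0, w) = 0 := by simp [tskZ]
lemma tskSig0 (p : ℕ) (k₁ : ℝ) (w : ℂ) : tskSig p k₁ (0, w) = 2 := by
  simp [tskSig, tskZ0, tskSg_zero]
lemma tskM0 (p : ℕ) (k₁ : ℝ) (w : ℂ) : tskM p k₁ (0, w) = Complex.I * π := by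
  simp [tskM, tskSig0, tskL0]

lemma tskY_cont (p : ℕ) (k₁ : ℝ) : Continuous (tskY p k₁) := by unfold tskY; fun_prop
lemma tskL_cont (p : ℕ) (k₁ : ℝ) : Continuous (tskL p k₁) := by
  have := tskY_cont p k₁
  unfold tskL; fun_prop
lemma tskZ_cont (p : ℕ) (k₁ : ℝ) (w : ℂ) : ContinuousAt (tskZ p k₁) (0, w) := by
  have := tskL_cont p k₁
  unfold tskZ
  exact ContinuousAt.div (by fun_prop) (by fun_prop) (by rw [tskL0]; simp [tsk_pi])
lemma tskSig_cont (p : ℕ) (k₁ : ℝ) (w : ℂ) : ContinuousAt (tskSig p k₁) (0, w) := by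
  unfold tskSig
  exact ContinuousAt.comp (g := tskSg) (f := tskZ p k₁)
    (tskSg_diff _ (by simp [tskZ0])).continuousAt (tskZ_cont p k₁ w)
lemma tskM_cont (p : ℕ) (k₁ : ℝ) (w : ℂ) : ContinuousAt (tskM p k₁) (0, w) := by
  have := (tskL_cont p k₁).continuousAt (x := ((0 : ℂ), w))
  have := tskSig_cont p k₁ w
  unfold tskM; fun_prop
lemma tskDel_cont (p : ℕ) (k₁ : ℝ) (w : ℂ) : ContinuousAt (tskDel p k₁) (0, w) := by
  have := tskSig_cont p k₁ w
  unfold tskDel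
  exact ContinuousAt.div (by fun_prop) (by fun_prop) (by rw [tskSig0]; simp)

lemma tsk_good (p : ℕ) (k₁ : ℝ) (w : ℂ) : ∀ᶠ x in nhds ((0 : ℂ), w), tskGood p k₁ x := by
  have c1 := tskZ_cont p k₁ w
  have c2 := (tskL_cont p k₁).continuousAt (x := ((0 : ℂ), w))
  have c3 := tskSig_cont p k₁ w
  have c4 := tskM_cont p k₁ w
  have c5 := tskDel_cont p k₁ w
  have hI : Complex.I * (π : ℂ) ≠ 0 := by simp [tsk_pi]
  unfold tskGood
  refine (c1.norm.eventually_lt_const (by simp [tskZ0])).and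
    ((c2.eventually_ne (by rw [tskL0]; exact hI)).and
    ((c3.eventually_ne (by rw [tskSig0]; simp)).and
    ((ContinuousAt.eventually_ne (g := fun x => tskSig p k₁ x + 2) (by fun_prop)
      (by simp only [tskSig0]; norm_num)).and
    ((ContinuousAt.eventually_ne (g := fun x => tskM p k₁ x + x.1 * tskDel p k₁ x) (by fun_prop)
      (by simp only [tskM0]; simpa using tsk_pi)).and
    (ContinuousAt.eventually_ne (g := fun x => tskM p k₁ x - x.1 * tskDel p k₁ x) (by fun_prop)
      (by simp only [tskM0]; simpa using tsk_pi))))))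

lemma tsk_quartic (p : ℕ) (k₁ : ℝ) (x : ℂ × ℂ) (h : tskL p k₁ x ≠ 0) :
    tskL p k₁ x ^ 2 * tskSig p k₁ x ^ 2 * (4 - tskSig p k₁ x ^ 2)
      = -4 * (2 * p * π) ^ 2 * x.1 ^ 2 := by
  have h1 := tskSg_quartic (tskZ p k₁ x)
  have h2 : tskZ p k₁ x * tskL p k₁ x = Complex.I * (2 * p * π) * x.1 := by
    unfold tskZ; field_simp
  change tskSig p k₁ x ^ 4 - 4 * tskSig p k₁ x ^ 2 + 4 * tskZ p k₁ x ^ 2 = 0 at h1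
  linear_combination (-tskL p k₁ x ^ 2) * h1 + 4 * (tskZ p k₁ x * tskL p k₁ x
    + Complex.I * (2 * p * π) * x.1) * h2 + 4 * (2 * p * π) ^ 2 * x.1 ^ 2 * Complex.I_sq

lemma tsk_circle (p : ℕ) (k₁ : ℝ) (x : ℂ × ℂ) (h : tskGood p k₁ x) :
    tskL p k₁ x ^ 2 = tskM p k₁ x ^ 2 + x.1 ^ 2 * tskDel p k₁ x ^ 2 := by
  obtain ⟨-, hL, hS, -⟩ := h
  have hq := tsk_quartic p k₁ x hL
  unfold tskM tskDel
  field_simp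
  linear_combination hq - 16 * p ^ 2 * π ^ 2 * x.1 ^ 2 * Complex.I_sq

lemma tsk_good_eig (p : ℕ) (hp : 0 < p) (k₁ k₂ k₄ : ℝ) (x : ℂ × ℂ) (h : tskGood p k₁ x)
    (hx : x.1 ≠ 0) (hD : tskD p k₁ k₂ k₄ x = 0) :
    IsDissipativeEigenvalue (4 * (p : ℝ) ^ 2 * π ^ 2) k₁ k₂ k₁ k₄ (tskL p k₁ x / x.1) := by
  have hc := tsk_circle p k₁ x h
  obtain ⟨-, hL, hS, -, h1, h2⟩ := h
  have hMD : tskM p k₁ x * tskDel p k₁ x = Complex.I * (p * π) * tskL p k₁ x := by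
    unfold tskM tskDel; field_simp
  refine tsk_eig _ k₁ k₂ k₄ (2 * p * π) _ (tskM p k₁ x / x.1 + tskDel p k₁ x)
    (tskM p k₁ x / x.1 - tskDel p k₁ x) ?_ ?_ ?_ ?_ ?_ ?_ ?_ hD
  · push_cast; ring
  · field_simp
    linear_combination -hc + 2 * x.1 * hMD
  · field_simp
    linear_combination -hc - 2 * x.1 * hMD
  · exact div_ne_zero hL hx
  · simp [tsk_pi, hp.ne']
  · intro h0; apply h1; field_simp at h0; linear_combination h0
  · intro h0; apply h2; field_simp at h0; linear_combination h0

lemma tsk_good_diff (p : ℕ) (k₁ k₂ k₄ : ℝ) (e w : ℂ) (h : tskGood p k₁ (e, w))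
    (hx : e ≠ 0) : DifferentiableAt ℂ (fun w => tskD p k₁ k₂ k₄ (e, w)) w := by
  obtain ⟨hZ, hL, hS, -, h1, h2⟩ := h
  have dL : DifferentiableAt ℂ (fun w => tskL p k₁ (e, w)) w := by
    unfold tskL tskY; fun_prop
  have dZ : DifferentiableAt ℂ (fun w => tskZ p k₁ (e, w)) w := by
    unfold tskZ; exact DifferentiableAt.div (by fun_prop) dL hL
  have dS : DifferentiableAt ℂ (fun w => tskSig p k₁ (e, w)) w := by
    unfold tskSig
    exact DifferentiableAt.comp (g := tskSg) (f := fun w => tskZ p k₁ (e, w)) w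
      (tskSg_diff _ hZ) dZ
  have dM : DifferentiableAt ℂ (fun w => tskM p k₁ (e, w)) w := by
    unfold tskM; exact (dL.mul dS).div_const 2
  have dD : DifferentiableAt ℂ (fun w => tskDel p k₁ (e, w)) w := by
    unfold tskDel; exact DifferentiableAt.div (by fun_prop) dS hS
  have n1 : tskM p k₁ (e, w) / e + tskDel p k₁ (e, w) ≠ 0 := by
    intro h0; apply h1; field_simp at h0; linear_combination h0
  have n2 : tskM p k₁ (e, w) / e - tskDel p k₁ (e, w) ≠ 0 := by
    intro h0; apply h2; field_simp at h0; linear_combination h0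
  have dr1 : DifferentiableAt ℂ (fun w => tskM p k₁ (e, w) / e + tskDel p k₁ (e, w)) w := by
    fun_prop
  have dr2 : DifferentiableAt ℂ (fun w => tskM p k₁ (e, w) / e - tskDel p k₁ (e, w)) w := by
    fun_prop
  have dl : DifferentiableAt ℂ (fun w => tskL p k₁ (e, w) / e) w := by fun_prop
  have ds1 := dr1.csinh
  have ds2 := dr2.csinh
  have dc1 := dr1.ccosh
  have dc2 := dr2.ccosh
  have dq1 := ds1.div dr1 n1
  have dq2 := ds2.div dr2 n2
  unfold tskD tskDet tskF1S tskF1T tskF2S tskF2T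
  simp only
  generalize (2 * p * π : ℂ) = β
  refine DifferentiableAt.sub (DifferentiableAt.mul ?_ ?_) (DifferentiableAt.mul ?_ ?_)
  · exact (((dl.pow 2).add (dl.const_mul _)).mul (dc1.sub dc2)).add
      ((((dr1.mul ds1).sub (dr2.mul ds2)).sub
        ((dl.const_mul _).mul (dq1.add dq2))).const_mul _)
  · exact ((((dl.pow 2).add (dl.const_mul _)).mul (dc1.sub dc2)).add
      (((dr1.mul ds1).sub (dr2.mul ds2)).const_mul _)).const_mul _
  · exact ((dl.add_const _).mul ((dr1.mul ds1).add (dr2.mul ds2))).add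
      ((dl.const_mul _).mul (dc1.add dc2))
  · exact (dl.const_mul _).mul ((((dl.pow 2).add (dl.const_mul _)).mul (dq1.add dq2)).add
      ((dc1.add dc2).const_mul _))

lemma tskShc_zero : tskShc 0 = 1 := by simp [tskShc]

lemma tskShc_contAt : ContinuousAt tskShc 0 := by
  unfold ContinuousAt; rw [tskShc_zero]; exact tskShc_tendsto

lemma tskG_contAt : ContinuousAt tskG 0 := by
  have : tskG 0 = 0 := by simp [tskG]
  unfold ContinuousAt; rw [this]; exact tskG_tendsto

lemma tsk_sq (s A B C D : ℂ) (hs : s ^ 2 = 1) :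
    (s * A) * (s * B) - (s * C) * (s * D) = A * B - C * D := by
  linear_combination (A * B - C * D) * hs

lemma tsk_limit (p : ℕ) (k₁ k₂ k₄ : ℝ) (w₁ : ℂ) :
    ∃ Φ : ℂ × ℂ → ℂ, ContinuousAt Φ (0, w₁) ∧
      Φ (0, w₁) = 4 * Complex.I * (2 * p * π) * ((π ^ 2 * w₁ + k₁ * k₂) * (π ^ 2 * w₁ + k₁ * k₄)) ∧
      ∀ (k : ℤ) (w : ℂ), k ≠ 0 → tskGood p k₁ ((k : ℂ)⁻¹, w) →
        tskD p k₁ k₂ k₄ ((k : ℂ)⁻¹, w) = Φ ((k : ℂ)⁻¹, w) := by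
  have hπ := tsk_pi
  have hI := Complex.I_sq
  have hIne := Complex.I_ne_zero
  have cY := (tskY_cont p k₁).continuousAt (x := ((0 : ℂ), w₁))
  have cL := (tskL_cont p k₁).continuousAt (x := ((0 : ℂ), w₁))
  have cS := tskSig_cont p k₁ w₁
  have cM := tskM_cont p k₁ w₁
  have cD := tskDel_cont p k₁ w₁
  have hL0 := tskL0 p k₁ w₁
  have hS0 := tskSig0 p k₁ w₁
  have hM0 := tskM0 p k₁ w₁
  obtain ⟨β, hβ⟩ : ∃ β : ℂ, β = 2 * p * π := ⟨_, rfl⟩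
  obtain ⟨X, hX, cX⟩ : ∃ X : ℂ × ℂ → ℂ, (∀ x, X x = -4 * β ^ 2 /
      (tskL p k₁ x ^ 2 * tskSig p k₁ x ^ 2 * (tskSig p k₁ x + 2))) ∧ ContinuousAt X (0, w₁) := by
    refine ⟨_, fun _ => rfl, ContinuousAt.div (by fun_prop) (by fun_prop) ?_⟩
    rw [hL0, hS0]; norm_num [hπ]
  have hX0 : X (0, w₁) = p ^ 2 := by
    have e0 : (Complex.I * (π : ℂ)) ^ 2 = -π ^ 2 := by rw [mul_pow, hI]; ring
    rw [hX, hL0, hS0, hβ, e0]; field_simp; ring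
  obtain ⟨V, hV, cV⟩ : ∃ V : ℂ × ℂ → ℂ, (∀ x, V x = tskY p k₁ x - tskL p k₁ x * X x / 2)
      ∧ ContinuousAt V (0, w₁) := ⟨_, fun _ => rfl, by fun_prop⟩
  have hV0 : V (0, w₁) = Complex.I * k₁ / π := by
    rw [hV, hL0, hX0]; simp only [tskY]; field_simp; ring
  obtain ⟨N, hN, cN⟩ : ∃ N : ℂ × ℂ → ℂ, (∀ x, N x = Complex.I * β * X x / (2 * tskSig p k₁ x))
      ∧ ContinuousAt N (0, w₁) := by
    refine ⟨_, fun _ => rfl, ContinuousAt.div (by fun_prop) (by fun_prop) ?_⟩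
    rw [hS0]; norm_num
  obtain ⟨J, hJ, cJ⟩ : ∃ J : ℂ × ℂ → ℂ, (∀ x, J x = -β ^ 2 *
      ((2 * Complex.I * π * tskY p k₁ x + x.1 ^ 2 * tskY p k₁ x ^ 2) * tskSig p k₁ x ^ 2
        * (tskSig p k₁ x + 2) + π ^ 2 * X x * (tskSig p k₁ x ^ 2 + 4 * tskSig p k₁ x + 8)) /
      (4 * π ^ 2 * (tskL p k₁ x ^ 2 * tskSig p k₁ x ^ 2 * (tskSig p k₁ x + 2))))
      ∧ ContinuousAt J (0, w₁) := by
    refine ⟨_, fun _ => rfl, ContinuousAt.div (by fun_prop) (by fun_prop) ?_⟩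
    rw [hL0, hS0]; norm_num [hπ]
  obtain ⟨m, hm, cm⟩ : ∃ m : ℂ × ℂ → ℂ, (∀ x, m x = tskY p k₁ x * (1 - x.1 ^ 2 * X x / 2)
      - Complex.I * π * X x / 2) ∧ ContinuousAt m (0, w₁) := ⟨_, fun _ => rfl, by fun_prop⟩
  obtain ⟨W, hW, cW⟩ : ∃ W : ℂ × ℂ → ℂ, (∀ x, W x = Complex.I * π * x.2 + x.1 *
      (π ^ 2 * J x / 2 + m x * V x - Complex.I * π * tskY p k₁ x * X x / 2))
      ∧ ContinuousAt W (0, w₁) := ⟨_, fun _ => rfl, by fun_prop⟩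
  have hW0 : W (0, w₁) = Complex.I * π * w₁ := by rw [hW]; simp
  obtain ⟨Q, hQ, cQ⟩ : ∃ Q : ℂ × ℂ → ℂ, (∀ x, Q x = 1 / (tskM p k₁ x ^ 2
      - x.1 ^ 2 * tskDel p k₁ x ^ 2)) ∧ ContinuousAt Q (0, w₁) := by
    refine ⟨_, fun _ => rfl, ContinuousAt.div (by fun_prop) (by fun_prop) ?_⟩
    rw [hM0]; norm_num [hπ]
  have hQ0 : Q (0, w₁) = -1 / π ^ 2 := by
    rw [hQ, hM0, mul_pow, hI]; norm_num
    field_simp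
  obtain ⟨a, ha, ca⟩ : ∃ a : ℂ × ℂ → ℂ, (∀ x, a x = tskShc (x.1 * V x)) ∧
      ContinuousAt a (0, w₁) := by
    refine ⟨_, fun _ => rfl, ?_⟩
    exact ContinuousAt.comp_of_eq (g := tskShc) (f := fun x : ℂ × ℂ => x.1 * V x) (y := 0)
      tskShc_contAt (by fun_prop) (by simp)
  have ha0 : a (0, w₁) = 1 := by
    rw [ha]; simp [tskShc_zero]
  obtain ⟨bb, hbb, cbb⟩ : ∃ a : ℂ × ℂ → ℂ, (∀ x, a x = tskShc (x.1 ^ 2 * N x)) ∧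
      ContinuousAt a (0, w₁) := by
    refine ⟨_, fun _ => rfl, ?_⟩
    exact ContinuousAt.comp_of_eq (g := tskShc) (f := fun x : ℂ × ℂ => x.1 ^ 2 * N x) (y := 0)
      tskShc_contAt (by fun_prop) (by simp)
  obtain ⟨g, hg, cg⟩ : ∃ a : ℂ × ℂ → ℂ, (∀ x, a x = tskG (x.1 * V x)) ∧
      ContinuousAt a (0, w₁) := by
    refine ⟨_, fun _ => rfl, ?_⟩
    exact ContinuousAt.comp_of_eq (g := tskG) (f := fun x : ℂ × ℂ => x.1 * V x) (y := 0)
      tskG_contAt (by fun_prop) (by simp)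
  have hg0 : g (0, w₁) = 0 := by rw [hg]; simp [tskG]
  obtain ⟨c, hc, cc⟩ : ∃ a : ℂ × ℂ → ℂ, (∀ x, a x = Complex.cosh (x.1 * V x)) ∧
      ContinuousAt a (0, w₁) := by
    refine ⟨_, fun _ => rfl, ?_⟩
    exact Complex.continuous_cosh.continuousAt.comp
      (f := fun x : ℂ × ℂ => x.1 * V x) (by fun_prop)
  have hc0 : c (0, w₁) = 1 := by rw [hc]; simp
  obtain ⟨d, hd, cd⟩ : ∃ a : ℂ × ℂ → ℂ, (∀ x, a x = Complex.cosh (x.1 ^ 2 * N x)) ∧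
      ContinuousAt a (0, w₁) := by
    refine ⟨_, fun _ => rfl, ?_⟩
    exact Complex.continuous_cosh.continuousAt.comp
      (f := fun x : ℂ × ℂ => x.1 ^ 2 * N x) (by fun_prop)
  have hd0 : d (0, w₁) = 1 := by rw [hd]; simp
  refine ⟨fun x =>
    (2 * x.1 * (tskL p k₁ x * V x * a x * tskL p k₁ x * N x * bb x
        + k₂ * tskL p k₁ x * V x * a x * x.1 * N x * bb x
        + k₁ * (tskM p k₁ x * c x * N x * bb x + tskDel p k₁ x * d x * V x * a x
          - Complex.I * β * (tskL p k₁ x * Q x * tskM p k₁ x * V x * a x * d x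
            - tskL p k₁ x * Q x * tskDel p k₁ x * c x * x.1 ^ 2 * N x * bb x))))
    * (-2 * Complex.I * β * x.1 * (tskL p k₁ x * V x * a x * tskL p k₁ x * N x * bb x
        + k₄ * tskL p k₁ x * V x * a x * x.1 * N x * bb x
        + k₁ * (tskM p k₁ x * c x * N x * bb x + tskDel p k₁ x * d x * V x * a x)))
    - (2 * (d x * tskL p k₁ x * tskM p k₁ x * V x ^ 2 * g x
        + tskDel p k₁ x * c x * x.1 * tskL p k₁ x * N x * bb x + k₂ * d x * tskM p k₁ x * V x * a x
        + k₂ * tskDel p k₁ x * c x * x.1 ^ 2 * N x * bb x + c x * d x * tskL p k₁ x * W x))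
    * (-2 * Complex.I * β * ((tskL p k₁ x ^ 2 * Q x) * tskL p k₁ x * tskM p k₁ x * V x ^ 2 * g x * d x
        + (tskL p k₁ x * W x + x.1 * (2 * tskDel p k₁ x ^ 2 * Q x) * tskL p k₁ x * tskM p k₁ x * V x)
          * c x * d x + (tskL p k₁ x ^ 2 * Q x) * k₄ * tskM p k₁ x * V x * a x * d x
        - (tskL p k₁ x ^ 2 * Q x) * tskDel p k₁ x * c x * x.1 * tskL p k₁ x * N x * bb x
        - (tskL p k₁ x ^ 2 * Q x) * k₄ * tskDel p k₁ x * c x * x.1 ^ 2 * N x * bb x)), ?_, ?_, ?_⟩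
  · fun_prop
  · simp only [hL0, hM0, hV0, hW0, hQ0, ha0, hg0, hc0, hd0]
    rw [← hβ]
    have e1 : Complex.I * (π : ℂ) * (Complex.I * k₁ / π) = -k₁ := by
      field_simp; linear_combination k₁ * hI
    have e2 : (Complex.I * (π : ℂ)) ^ 2 * (-1 / (π : ℂ) ^ 2) = 1 := by
      field_simp; linear_combination -hI
    have e3 : Complex.I * (π : ℂ) * (Complex.I * π * w₁) = - (π ^ 2 * w₁) := by
      linear_combination π ^ 2 * w₁ * hI
    have e4 : (k₂ : ℂ) * 1 * (Complex.I * (π : ℂ)) * (Complex.I * k₁ / π) * 1 = - (k₁ * k₂) := by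
      linear_combination k₂ * e1
    have e5 : (1 : ℂ) * k₄ * (Complex.I * (π : ℂ)) * (Complex.I * k₁ / π) * 1 * 1 = - (k₁ * k₄) := by
      linear_combination k₄ * e1
    rw [e2, e3, e4, e5]
    have e6 : (1 : ℂ) * 1 * (Complex.I * ↑π) * (Complex.I * ↑π * w₁) = - (π ^ 2 * w₁) := by
      linear_combination e3
    rw [e6]
    ring
  · intro k w hk hgood
    have hk' : (k : ℂ) ≠ 0 := by exact_mod_cast hk
    obtain ⟨x, hx⟩ : ∃ x : ℂ × ℂ, x = ((k : ℂ)⁻¹, w) := ⟨_, rfl⟩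
    have hx1 : x.1 = (k : ℂ)⁻¹ := by rw [hx]
    rw [← hx] at hgood ⊢
    have he : x.1 ≠ 0 := by rw [hx1]; exact inv_ne_zero hk'
    have hcirc := tsk_circle p k₁ x hgood
    obtain ⟨-, hL, hS, hS2, h1, h2⟩ := hgood
    have hquart := tsk_quartic p k₁ x hL
    rw [← hβ] at hquart
    have hXS : 2 - tskSig p k₁ x = x.1 ^ 2 * X x := by
      rw [hX]; field_simp; linear_combination hquart
    have hdel : tskDel p k₁ x = Complex.I * (p * π) + x.1 ^ 2 * N x := by
      have e1 : x.1 ^ 2 * N x = Complex.I * β * (2 - tskSig p k₁ x) / (2 * tskSig p k₁ x) := by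
        rw [hN, hXS]; ring
      rw [e1]; unfold tskDel; rw [hβ]; field_simp; ring
    have hLd : tskL p k₁ x = Complex.I * π + x.1 ^ 2 * tskY p k₁ x := rfl
    have hMd : tskM p k₁ x = tskL p k₁ x * tskSig p k₁ x / 2 := rfl
    have hYd : π * tskY p k₁ x = Complex.I * (2 * k₁ + p ^ 2 * π ^ 2) / 2 + π * x.2 * x.1 := by
      unfold tskY; field_simp
    have hke : k * x.1 = 1 := by rw [hx1]; field_simp
    have hMM : tskM p k₁ x / x.1 = k * (π * Complex.I) + x.1 * V x := by
      rw [div_eq_iff he]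
      linear_combination hMd + (-tskL p k₁ x / 2) * hXS - π * Complex.I * hke
        - x.1 ^ 2 * hV x + hLd
    have hJX : X x - p ^ 2 = x.1 ^ 2 * J x := by
      have e1 : tskL p k₁ x ^ 2 * tskSig p k₁ x ^ 2 * (tskSig p k₁ x + 2) + 16 * π ^ 2
          = x.1 ^ 2 * ((2 * Complex.I * π * tskY p k₁ x + x.1 ^ 2 * tskY p k₁ x ^ 2)
            * tskSig p k₁ x ^ 2 * (tskSig p k₁ x + 2)
            + π ^ 2 * X x * (tskSig p k₁ x ^ 2 + 4 * tskSig p k₁ x + 8)) := by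
        rw [hLd]
        linear_combination (π ^ 2 * (tskSig p k₁ x ^ 2 + 4 * tskSig p k₁ x + 8)) * hXS
          + π ^ 2 * tskSig p k₁ x ^ 2 * (tskSig p k₁ x + 2) * hI
      have hD0 : tskL p k₁ x ^ 2 * tskSig p k₁ x ^ 2 * (tskSig p k₁ x + 2) ≠ 0 :=
        mul_ne_zero (mul_ne_zero (pow_ne_zero _ hL) (pow_ne_zero _ hS)) hS2
      have e2 : x.1 ^ 2 * J x = -β ^ 2 * (tskL p k₁ x ^ 2 * tskSig p k₁ x ^ 2
          * (tskSig p k₁ x + 2) + 16 * π ^ 2) /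
          (4 * π ^ 2 * (tskL p k₁ x ^ 2 * tskSig p k₁ x ^ 2 * (tskSig p k₁ x + 2))) := by
        rw [e1, hJ]; ring
      rw [e2, hX]
      clear e1 e2
      generalize tskL p k₁ x ^ 2 * tskSig p k₁ x ^ 2 * (tskSig p k₁ x + 2) = D at hD0
      rw [hβ]
      field_simp
      ring
    have hMm : tskM p k₁ x = Complex.I * π + x.1 ^ 2 * m x := by
      rw [hm, hMd]
      linear_combination (-tskL p k₁ x / 2) * hXS + (1 - x.1 ^ 2 * X x / 2) * hLd
    have hWW : x.1 * W x = tskM p k₁ x * V x + k₁ := by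
      have e1 : Complex.I * π * V x = Complex.I * π * x.2 * x.1 - k₁ + π ^ 2 * (X x - p ^ 2) / 2
          - Complex.I * π * x.1 ^ 2 * tskY p k₁ x * X x / 2 := by
        rw [hV, hLd]
        linear_combination Complex.I * hYd + ((2 * k₁ + p ^ 2 * π ^ 2) / 2 - π ^ 2 * X x / 2) * hI
      rw [hMm, hW]
      linear_combination -e1 - π ^ 2 / 2 * hJX
    have hr₁ : tskM p k₁ x / x.1 + tskDel p k₁ x ≠ 0 := by
      intro h0; apply h1; field_simp at h0; linear_combination h0
    have hr₂ : tskM p k₁ x / x.1 - tskDel p k₁ x ≠ 0 := by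
      intro h0; apply h2; field_simp at h0; linear_combination h0
    obtain ⟨s, hs, hyp⟩ := tsk_hyp k p (x.1 * V x) (x.1 ^ 2 * N x)
    obtain ⟨y1, y2, y3, y4⟩ := hyp (tskM p k₁ x / x.1 + tskDel p k₁ x)
      (tskM p k₁ x / x.1 - tskDel p k₁ x) (by rw [hMM, hdel]; push_cast; ring)
      (by rw [hMM, hdel]; push_cast; ring)
    rw [← hc, ← hd] at y1 y2 y3 y4
    obtain ⟨f1, f2, f3, f4⟩ := tsk_alg x.1 (tskL p k₁ x) (tskM p k₁ x) (tskDel p k₁ x) (V x) (N x)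
      (W x) (a x) (c x) (g x) (bb x) (d x) k₁ k₂ k₄ β s Complex.I (tskL p k₁ x / x.1) _ _ _ _ _ _
      _ _ (Q x) he hr₁ hr₂ rfl rfl rfl y1 y2 y3 y4
      (by rw [ha]; exact tskShc_mul _) (by rw [hc, hg]; exact tskG_mul _)
      (by rw [hbb]; exact tskShc_mul _) hWW
      (by rw [hQ]; refine one_div_mul_cancel ?_
          intro h0
          refine mul_ne_zero h1 h2 ?_
          linear_combination h0) hcirc
    unfold tskD tskDet tskF1S tskF1T tskF2S tskF2T
    rw [← hβ, f1, f2, f3, f4]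
    exact tsk_sq s _ _ _ _ hs

lemma tsk_inv_tendsto (w₁ : ℂ) : Tendsto (fun q : ℤ × ℂ => ((q.1 : ℂ)⁻¹, q.2))
    (cocompact ℤ ×ˢ nhds w₁) (nhds ((0 : ℂ), w₁)) := by
  have h1 : Tendsto (fun k : ℤ => (k : ℂ)⁻¹) (cocompact ℤ) (nhds 0) := by
    rw [tendsto_zero_iff_norm_tendsto_zero]
    have := tendsto_inv_atTop_zero.comp (tendsto_norm_cocompact_atTop (E := ℤ))
    refine this.congr fun k => ?_
    simp [Int.norm_eq_abs]
  rw [nhds_prod_eq]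
  exact (h1.comp tendsto_fst).prodMk tendsto_snd

lemma tsk_ev_ne : ∀ᶠ k : ℤ in cocompact ℤ, k ≠ 0 := by
  have := (tendsto_norm_cocompact_atTop (E := ℤ)).eventually_gt_atTop 0
  exact this.mono fun k hk => norm_pos_iff.1 hk

lemma tsk_branch (p : ℕ) (hp : 0 < p) (k₁ k₂ k₄ : ℝ) (w₀ w' : ℂ) (hw : w₀ ≠ w')
    (hG : ∀ w : ℂ, (π ^ 2 * w + k₁ * k₂) * (π ^ 2 * w + k₁ * k₄) = 0 ↔ w = w₀ ∨ w = w') :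
    ∃ w : ℤ → ℂ, Tendsto w (cocompact ℤ) (nhds w₀) ∧ ∀ᶠ k : ℤ in cocompact ℤ,
      IsDissipativeEigenvalue (4 * (p : ℝ) ^ 2 * π ^ 2) k₁ k₂ k₁ k₄
        (tskL p k₁ ((k : ℂ)⁻¹, w k) / (k : ℂ)⁻¹) := by
  have hne1 : ∀ w₁ : ℂ, ∀ᶠ q : ℤ × ℂ in cocompact ℤ ×ˢ nhds w₁, q.1 ≠ 0 := fun w₁ =>
    tendsto_fst.eventually tsk_ev_ne
  have hgood : ∀ w₁ : ℂ, ∀ᶠ q : ℤ × ℂ in cocompact ℤ ×ˢ nhds w₁,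
      tskGood p k₁ ((q.1 : ℂ)⁻¹, q.2) := fun w₁ =>
    (tsk_inv_tendsto w₁).eventually (tsk_good p k₁ w₁)
  refine tsk_select (fun k w => IsDissipativeEigenvalue (4 * (p : ℝ) ^ 2 * π ^ 2) k₁ k₂ k₁ k₄
        (tskL p k₁ ((k : ℂ)⁻¹, w) / (k : ℂ)⁻¹)) w₀ (dist w' w₀) (dist_pos.2 hw.symm) ?_
  intro r hr hrR
  have hcB : IsCompact (Metric.closedBall w₀ r) := isCompact_closedBall w₀ r
  have hgd : ∀ᶠ k : ℤ in cocompact ℤ, ∀ w ∈ Metric.closedBall w₀ r,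
      tskGood p k₁ ((k : ℂ)⁻¹, w) := by
    have := hcB.mem_prod_nhdsSet_of_forall (l := cocompact ℤ)
      (s := {q : ℤ × ℂ | tskGood p k₁ ((q.1 : ℂ)⁻¹, q.2)}) (fun y _ => hgood y)
    exact (Eventually.curry this).mono fun _ h => h.self_of_nhdsSet
  have hh := tsk_hurwitz (l := cocompact ℤ) (fun k w => tskD p k₁ k₂ k₄ ((k : ℂ)⁻¹, w))
    (fun w => 4 * Complex.I * (2 * p * π) * ((π ^ 2 * w + k₁ * k₂) * (π ^ 2 * w + k₁ * k₄))) w₀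
    (by
      intro w₁
      obtain ⟨Φ, hc, hv, hΦ⟩ := tsk_limit p k₁ k₂ k₄ w₁
      have ht := hc.tendsto.comp (tsk_inv_tendsto w₁)
      rw [hv] at ht
      refine ht.congr' ?_
      filter_upwards [hne1 w₁, hgood w₁] with q h1 h2
      exact (hΦ q.1 q.2 h1 h2).symm)
    (by
      intro w₁
      filter_upwards [hne1 w₁, hgood w₁] with q h1 h2
      exact tsk_good_diff p k₁ k₂ k₄ _ _ h2 (inv_ne_zero (by exact_mod_cast h1)))
    (by fun_prop)
    (by simp only [(hG w₀).2 (Or.inl rfl), mul_zero])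
    r hr
    (by
      intro w hws h0
      have hpc : (p : ℂ) ≠ 0 := by exact_mod_cast hp.ne'
      have hK : 4 * Complex.I * (2 * p * (π : ℂ)) ≠ 0 :=
        mul_ne_zero (mul_ne_zero (by norm_num) Complex.I_ne_zero)
          (mul_ne_zero (mul_ne_zero (by norm_num) hpc) tsk_pi)
      have h1 := (hG w).1 ((mul_eq_zero.1 h0).resolve_left hK)
      have h2 : dist w w₀ = r := hws
      rcases h1 with h1 | h1
      · rw [h1, dist_self] at h2; linarith
      · rw [h1] at h2; linarith)
  filter_upwards [hgd, hh, tsk_ev_ne] with k h1 h2 h3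
  obtain ⟨w, hwb, hw0⟩ := h2
  exact ⟨w, hwb, tsk_good_eig p hp k₁ k₂ k₄ _ (h1 w hwb)
    (inv_ne_zero (by exact_mod_cast h3)) hw0⟩

lemma tsk_expand (p : ℕ) (k₁ : ℝ) (k : ℤ) (hk : k ≠ 0) (w : ℂ) :
    (k : ℂ) ^ 2 * (tskL p k₁ ((k : ℂ)⁻¹, w) / (k : ℂ)⁻¹ - Complex.I * (k : ℂ) * (π : ℂ)
            - Complex.I * (((2 * k₁ + (p : ℝ) ^ 2 * π ^ 2) : ℝ) : ℂ)
              / (2 * (k : ℂ) * (π : ℂ))) = w := by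
  have hk' : (k : ℂ) ≠ 0 := by exact_mod_cast hk
  have hπ := tsk_pi
  unfold tskL tskY
  push_cast
  field_simp
  ring

/-- First exceptional case (`k₁ = k₃`, `k₂ ≠ k₄`, `b = 4p²π²`): asymptotic
expansions `λ_k^1 = ikπ + i(2k₁+p²π²)/(2kπ) − k₁k₂/(k²π²) + o(1/k²)` and
`λ_k^2 = ikπ + i(2k₁+p²π²)/(2kπ) − k₁k₄/(k²π²) + o(1/k²)`. -/
theorem exceptional_case_eigenvalue_expansion
    (p : ℕ) (hp : 0 < p) (k₁ k₂ k₄ : ℝ) (hk₁ : 0 < k₁) (hk₂ : 0 < k₂)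
    (hk₄ : 0 < k₄) (hne : k₂ ≠ k₄) :
    let b := 4 * (p : ℝ) ^ 2 * π ^ 2
    ∃ k₀ : ℤ, 1 ≤ k₀ ∧ ∃ lam₁ lam₂ : ℤ → ℂ,
      (∀ k : ℤ, k₀ ≤ |k| →
          IsDissipativeEigenvalue b k₁ k₂ k₁ k₄ (lam₁ k) ∧
          IsDissipativeEigenvalue b k₁ k₂ k₁ k₄ (lam₂ k)) ∧
      Tendsto (fun k : ℤ =>
          (k : ℂ) ^ 2 * (lam₁ k - Complex.I * (k : ℂ) * (π : ℂ)
            - Complex.I * (((2 * k₁ + (p : ℝ) ^ 2 * π ^ 2) : ℝ) : ℂ)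
              / (2 * (k : ℂ) * (π : ℂ))))
        (cocompact ℤ) (nhds (-(((k₁ * k₂ / π ^ 2 : ℝ)) : ℂ))) ∧
      Tendsto (fun k : ℤ =>
          (k : ℂ) ^ 2 * (lam₂ k - Complex.I * (k : ℂ) * (π : ℂ)
            - Complex.I * (((2 * k₁ + (p : ℝ) ^ 2 * π ^ 2) : ℝ) : ℂ)
              / (2 * (k : ℂ) * (π : ℂ))))
        (cocompact ℤ) (nhds (-(((k₁ * k₄ / π ^ 2 : ℝ)) : ℂ))) := by
  intro b
  have hπ := tsk_pi
  have hk₁c : (k₁ : ℂ) ≠ 0 := by exact_mod_cast hk₁.ne'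
  have hroot : ∀ w a : ℂ, π ^ 2 * w + k₁ * a = 0 ↔ w = -(k₁ * a / π ^ 2) := by
    intro w a
    constructor
    · intro h
      field_simp
      linear_combination h
    · intro h
      rw [h]; field_simp; ring
  have hcast : ∀ a : ℝ, -(((k₁ * a / π ^ 2 : ℝ)) : ℂ) = -((k₁ : ℂ) * a / π ^ 2) := by
    intro a; push_cast; ring
  have hdist : -((k₁ : ℂ) * k₂ / π ^ 2) ≠ -((k₁ : ℂ) * k₄ / π ^ 2) := by
    intro h
    apply hne
    field_simp at h
    exact_mod_cast neg_injective h
  obtain ⟨w₁, t₁, e₁⟩ := tsk_branch p hp k₁ k₂ k₄ _ _ hdist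
    (fun w => by rw [mul_eq_zero, hroot, hroot])
  obtain ⟨w₂, t₂, e₂⟩ := tsk_branch p hp k₁ k₂ k₄ _ _ hdist.symm
    (fun w => by rw [mul_eq_zero, hroot, hroot, or_comm])
  have hev := e₁.and e₂
  obtain ⟨K, hK, hKs⟩ := mem_cocompact.1 hev
  obtain ⟨R, hR⟩ := hK.isBounded.subset_closedBall 0
  refine ⟨max 1 (⌊R⌋ + 1), le_max_left _ _, fun k : ℤ => tskL p k₁ ((k : ℂ)⁻¹, w₁ k) / (k : ℂ)⁻¹,
    fun k : ℤ => tskL p k₁ ((k : ℂ)⁻¹, w₂ k) / (k : ℂ)⁻¹, ?_, ?_, ?_⟩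
  · intro k hk
    refine hKs fun hkK => ?_
    have h1 := hR hkK
    rw [mem_closedBall_zero_iff, Int.norm_eq_abs] at h1
    have h2 : ⌊R⌋ + 1 ≤ |k| := (le_max_right _ _).trans hk
    have h3 : |k| ≤ ⌊R⌋ := Int.le_floor.2 (by push_cast; exact h1)
    omega
  · rw [hcast]
    refine t₁.congr' ?_
    filter_upwards [tsk_ev_ne] with k hk
    exact (tsk_expand p k₁ k hk _).symm
  · rw [hcast]
    refine t₂.congr' ?_
    filter_upwards [tsk_ev_ne] with k hk
    exact (tsk_expand p k₁ k hk _).symm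
end

section
/- Let a, b, k₁, k₃ > 0 be real constants, let f₂, f₄ : [0,1] → ℂ be continuous, and let c₅, c₆ ∈ ℂ. Then there exists a unique pair (u, y) of twice continuously differentiable functions u, y : [0,1] → ℂ satisfying u(0) = y(0) = 0, u''(x) + y'(x) = f₂(x) and a·y''(x) − b·(u'(x) + y(x)) = f₄(x) for all x ∈ [0,1], together with −k₁·(u'(1) + y(1)) = c₅ and −k₃·y'(1) = c₆. -/
open Set

theorem aux_prim (g : ℝ → ℂ) (hg : Continuous g) (p : ℝ) (c : ℂ) :
    ∃ G : ℝ → ℂ, G p = c ∧ ∀ x, HasDerivAt G (g x) x := by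
  refine ⟨fun x => c + ∫ t in p..x, g t, by simp, fun x => ?_⟩
  exact (intervalIntegral.integral_hasDerivAt_right (hg.intervalIntegrable _ _)
    hg.aestronglyMeasurable.stronglyMeasurableAtFilter hg.continuousAt).const_add c

theorem aux_eq (F G F' G' : ℝ → ℂ) (hF : ∀ x, HasDerivAt F (F' x) x)
    (hG : ∀ x, HasDerivAt G (G' x) x) (h : ∀ x ∈ Icc (0:ℝ) 1, F' x = G' x)
    (p : ℝ) (hp : p ∈ Icc (0:ℝ) 1) (hpe : F p = G p) :
    ∀ x ∈ Icc (0:ℝ) 1, F x = G x := by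
  have key : ∀ x ∈ Icc (0:ℝ) 1, F x - G x = F 0 - G 0 := by
    refine constant_of_has_deriv_right_zero (f := fun x => F x - G x) ?_ ?_
    · intro x _
      exact ((hF x).sub (hG x)).continuousAt.continuousWithinAt
    · intro x hx
      have := ((hF x).sub (hG x)).hasDerivWithinAt (s := Ici x)
      rw [h x ⟨hx.1, hx.2.le⟩, sub_self] at this
      exact this
  intro x hx
  have h1 := key x hx
  have h2 := key p hp
  rw [← h2, hpe, sub_self] at h1
  exact sub_eq_zero.mp h1

theorem aux_contDiff (F F' F'' : ℝ → ℂ) (hF : ∀ x, HasDerivAt F (F' x) x)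
    (hF' : ∀ x, HasDerivAt F' (F'' x) x) (hc : Continuous F'') : ContDiff ℝ 2 F := by
  have e1 : deriv F = F' := funext fun x => (hF x).deriv
  have e2 : deriv F' = F'' := funext fun x => (hF' x).deriv
  have h1 : ContDiff ℝ 1 F' := by
    rw [contDiff_one_iff_deriv, e2]
    exact ⟨fun x => (hF' x).differentiableAt, hc⟩
  rw [show (2 : WithTop ℕ∞) = 1 + 1 by norm_num, contDiff_succ_iff_deriv, e1]
  exact ⟨fun x => (hF x).differentiableAt, by simp, h1⟩

theorem aux_derivs (F : ℝ → ℂ) (h : ContDiff ℝ 2 F) :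
    (∀ x, HasDerivAt F (deriv F x) x) ∧ ∀ x, HasDerivAt (deriv F) (deriv (deriv F) x) x := by
  rw [show (2 : WithTop ℕ∞) = 1 + 1 by norm_num, contDiff_succ_iff_deriv] at h
  exact ⟨fun x => (h.1 x).hasDerivAt,
    fun x => (h.2.2.differentiable (by norm_num) x).hasDerivAt⟩

/-- The boundary value problem solved in the proof that the Timoshenko generator
`𝒜` is maximal: existence and uniqueness (on `[0,1]`) of a solution pair. -/
theorem maximality_bvp
    (a b k₁ k₃ : ℝ) (ha : 0 < a) (hb : 0 < b) (hk₁ : 0 < k₁) (hk₃ : 0 < k₃)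
    (f₂ f₄ : ℝ → ℂ) (hf₂ : Continuous f₂) (hf₄ : Continuous f₄)
    (c₅ c₆ : ℂ) :
    (∃ u y : ℝ → ℂ,
      ContDiff ℝ 2 u ∧ ContDiff ℝ 2 y ∧ u 0 = 0 ∧ y 0 = 0 ∧
      (∀ x ∈ Icc (0:ℝ) 1, deriv (deriv u) x + deriv y x = f₂ x) ∧
      (∀ x ∈ Icc (0:ℝ) 1,
        (a : ℂ) * deriv (deriv y) x - (b : ℂ) * (deriv u x + y x) = f₄ x) ∧
      -(k₁ : ℂ) * (deriv u 1 + y 1) = c₅ ∧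
      -(k₃ : ℂ) * deriv y 1 = c₆) ∧
    (∀ u y u' y' : ℝ → ℂ,
      (ContDiff ℝ 2 u ∧ ContDiff ℝ 2 y ∧ u 0 = 0 ∧ y 0 = 0 ∧
        (∀ x ∈ Icc (0:ℝ) 1, deriv (deriv u) x + deriv y x = f₂ x) ∧
        (∀ x ∈ Icc (0:ℝ) 1,
          (a : ℂ) * deriv (deriv y) x - (b : ℂ) * (deriv u x + y x) = f₄ x) ∧
        -(k₁ : ℂ) * (deriv u 1 + y 1) = c₅ ∧
        -(k₃ : ℂ) * deriv y 1 = c₆) →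
      (ContDiff ℝ 2 u' ∧ ContDiff ℝ 2 y' ∧ u' 0 = 0 ∧ y' 0 = 0 ∧
        (∀ x ∈ Icc (0:ℝ) 1, deriv (deriv u') x + deriv y' x = f₂ x) ∧
        (∀ x ∈ Icc (0:ℝ) 1,
          (a : ℂ) * deriv (deriv y') x - (b : ℂ) * (deriv u' x + y' x) = f₄ x) ∧
        -(k₁ : ℂ) * (deriv u' 1 + y' 1) = c₅ ∧
        -(k₃ : ℂ) * deriv y' 1 = c₆) →
      ∀ x ∈ Icc (0:ℝ) 1, u x = u' x ∧ y x = y' x) := by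
  have ha' : (a : ℂ) ≠ 0 := by exact_mod_cast ha.ne'
  have hk₁' : (k₁ : ℂ) ≠ 0 := by exact_mod_cast hk₁.ne'
  have hk₃' : (k₃ : ℂ) ≠ 0 := by exact_mod_cast hk₃.ne'
  constructor
  · obtain ⟨φ, hφ1, hφ⟩ := aux_prim f₂ hf₂ 1 (-c₅ / k₁)
    have cφ : Continuous φ := continuous_iff_continuousAt.2 fun x => (hφ x).continuousAt
    have cg : Continuous fun x => (f₄ x + b * φ x) / a := by fun_prop
    obtain ⟨z, hz1, hz⟩ := aux_prim _ cg 1 (-c₆ / k₃)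
    have cz : Continuous z := continuous_iff_continuousAt.2 fun x => (hz x).continuousAt
    obtain ⟨y, hy0, hy⟩ := aux_prim z cz 0 0
    have cy : Continuous y := continuous_iff_continuousAt.2 fun x => (hy x).continuousAt
    obtain ⟨u, hu0, hu⟩ := aux_prim (fun x => φ x - y x) (by fun_prop) 0 0
    have hu2 : ∀ x, HasDerivAt (fun x => φ x - y x) (f₂ x - z x) x :=
      fun x => (hφ x).sub (hy x)
    have eu : deriv u = fun x => φ x - y x := funext fun x => (hu x).deriv
    have ey : deriv y = z := funext fun x => (hy x).deriv
    refine ⟨u, y, aux_contDiff _ _ _ hu hu2 (by fun_prop), aux_contDiff _ _ _ hy hz cg,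
      hu0, hy0, ?_, ?_, ?_, ?_⟩
    · intro x _
      rw [eu, ey, (hu2 x).deriv]
      ring
    · intro x _
      rw [eu, ey, (hz x).deriv]
      field_simp
      ring
    · rw [eu]
      simp only [hφ1, sub_add_cancel]
      field_simp
    · rw [ey, hz1]
      field_simp
  · rintro u y u' y' ⟨hu, hy, u0, y0, e1, e2, e3, e4⟩ ⟨hu', hy', u0', y0', e1', e2', e3', e4'⟩
    obtain ⟨du, ddu⟩ := aux_derivs u hu
    obtain ⟨dy, ddy⟩ := aux_derivs y hy
    obtain ⟨du', ddu'⟩ := aux_derivs u' hu'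
    obtain ⟨dy', ddy'⟩ := aux_derivs y' hy'
    have m0 : (0:ℝ) ∈ Icc (0:ℝ) 1 := by simp
    have m1 : (1:ℝ) ∈ Icc (0:ℝ) 1 := by simp
    have hφ := aux_eq _ _ _ _ (fun x => (ddu x).add (dy x)) (fun x => (ddu' x).add (dy' x))
      (fun x hx => (e1 x hx).trans (e1' x hx).symm) 1 m1
      (mul_left_cancel₀ (neg_ne_zero.2 hk₁') (e3.trans e3'.symm))
    simp only [Pi.add_apply] at hφ
    have hz := aux_eq _ _ _ _ ddy ddy' (fun x hx => by
      have h1 := e2 x hx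
      rw [← e2' x hx, hφ x hx] at h1
      exact mul_left_cancel₀ ha' (sub_left_injective h1)) 1 m1
      (mul_left_cancel₀ (neg_ne_zero.2 hk₃') (e4.trans e4'.symm))
    have hyy := aux_eq _ _ _ _ dy dy' hz 0 m0 (y0.trans y0'.symm)
    have huu := aux_eq _ _ _ _ du du' (fun x hx => by
      have h1 := hφ x hx
      rw [hyy x hx] at h1
      exact add_right_cancel h1) 0 m0 (u0.trans u0'.symm)
    exact fun x hx => ⟨huu x hx, hyy x hx⟩
end
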